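/- Let A be a 2-Calabi-Yau tilted algebra, J = A e_i A, B = A/J, and X ∈ J^⊥. Then Ext^1_A(X, B) = 0. -/

import Mathlib

noncomputable section

open CategoryTheory Opposite DirectSum MulOpposite

/-- An idempotent is primitive if it is nonzero and is not the sum of two nonzero
orthogonal idempotents. -/
def IsPrimitiveIdempotent {A : Type} [Ring A] (a : A) : Prop :=
  IsIdempotentElem a ∧ a ≠ 0 ∧
    ∀ b c : A, IsIdempotentElem b → IsIdempotentElem c → b * c = 0 → c * b = 0 →
      a = b + c → b = 0 ∨ c = 0

/-- A complete family of orthogonal idempotents. -/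
def CompOrthIdem {A ι : Type} [Ring A] [Fintype ι] (e : ι → A) : Prop :=
  (∀ i j, i ≠ j → e i * e j = 0) ∧ (∀ i, IsIdempotentElem (e i)) ∧ (∑ i, e i) = 1

/-- The two-sided ideal `A e A` generated by an idempotent `e`, viewed as a
right `A`-module (i.e. a module over `Aᵐᵒᵖ`): it is the right `A`-submodule of `A`
spanned by all elements `b * e`. -/
def genIdeal {A : Type} [Ring A] (e : A) : Submodule Aᵐᵒᵖ A :=
  Submodule.span Aᵐᵒᵖ {x | ∃ b : A, x = b * e}

/-- The indecomposable projective right module `e A` at the idempotent `e`. -/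
def pIdeal {A : Type} [Ring A] (e : A) : Submodule Aᵐᵒᵖ A :=
  Submodule.span Aᵐᵒᵖ ({e} : Set A)

/-- The radical of a module: the intersection of all maximal submodules.
For a finite dimensional module `M` over a finite dimensional algebra this is `M · rad A`. -/
def radical (R M : Type) [Ring R] [AddCommGroup M] [Module R M] : Submodule R M :=
  sInf {m | IsCoatom m}

/-- `Ext¹` for right `A`-modules, as a `k`-module. -/
abbrev rext1 (k : Type) [Field k] (A : Type) [Ring A] [Algebra k A]
    (M N : ModuleCat.{0} Aᵐᵒᵖ) : ModuleCat.{0} k :=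
  ((Ext k (ModuleCat.{0} Aᵐᵒᵖ) 1).obj (op M)).obj N

/-- A right `A`-module `M` is Cohen-Macaulay if `Ext¹_A(M, A) = 0`. -/
def IsCM (k : Type) [Field k] (A : Type) [Ring A] [Algebra k A]
    (M : ModuleCat.{0} Aᵐᵒᵖ) : Prop :=
  Subsingleton (rext1 k A M (ModuleCat.of Aᵐᵒᵖ A))

/-- A witness that `B` is a 2-Calabi-Yau tilted algebra: a Hom-finite, idempotent
complete (hence Krull-Schmidt), `k`-linear triangulated 2-Calabi-Yau category `C`
together with a cluster-tilting object `T` such that `B ≅ End_C T`. -/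
structure CYTiltedWitness (k : Type) [Field k] (B : Type) [Ring B] [Algebra k B] :
    Type 1 where
  C : Type
  [cat : Category.{0} C]
  [pre : Preadditive C]
  [lin : Linear k C]
  [shift : HasShift C ℤ]
  [zero : Limits.HasZeroObject C]
  [shiftAdd : ∀ n : ℤ, (shiftFunctor C n).Additive]
  [tri : Pretriangulated C]
  [biprod : Limits.HasFiniteBiproducts C]
  [idem : IsIdempotentComplete C]
  homFinite : ∀ X Y : C, FiniteDimensional k (X ⟶ Y)
  /-- the 2-Calabi-Yau property: a Serre duality `D Hom(X,Y) ≅ Hom(Y, X⟦2⟧)` -/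
  serre : ∀ X Y : C, Nonempty ((X ⟶ Y) ≃ₗ[k] Module.Dual k (Y ⟶ X⟦(2:ℤ)⟧))
  T : C
  /-- `T` is cluster-tilting: `add T = {X | Ext¹(T, X) = 0}` -/
  clusterTilting : ∀ X : C, (∀ f : T ⟶ X⟦(1:ℤ)⟧, f = 0) ↔
    ∃ (n : ℕ) (s : X ⟶ ⨁ (fun _ : Fin n => T)) (r : (⨁ (fun _ : Fin n => T)) ⟶ X),
      s ≫ r = 𝟙 X
  algIso : Nonempty (B ≃ₐ[k] End T)

/-- `B` is a 2-Calabi-Yau tilted algebra. -/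
def IsCYTilted (k : Type) [Field k] (B : Type) [Ring B] [Algebra k B] : Prop :=
  Nonempty (CYTiltedWitness k B)

/-- `M` is a module over `B = A/AeA`: the ideal `J = AeA` acts trivially. -/
def JTriv {A : Type} [Ring A] (e : A) (M : Type) [AddCommGroup M]
    [Module Aᵐᵒᵖ M] : Prop :=
  ∀ a ∈ genIdeal e, ∀ m : M, (MulOpposite.op a) • m = 0

/-- `N` belongs to `add J`, i.e. is a direct summand of a finite direct sum of
copies of `J = AeA`. -/
def InAddJ {A : Type} [Ring A] (e : A) (N : ModuleCat.{0} Aᵐᵒᵖ) : Prop :=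
  ∃ (n : ℕ) (s : N →ₗ[Aᵐᵒᵖ] (Fin n → ↥(genIdeal e)))
    (r : (Fin n → ↥(genIdeal e)) →ₗ[Aᵐᵒᵖ] N), r ∘ₗ s = LinearMap.id

/-- `f : J_X → X` is an `add J`-approximation: `J_X ∈ add J` and every map from a
module of `add J` to `X` factors through `f`. -/
def IsAddJApprox {A : Type} [Ring A] (e : A) (JX X : ModuleCat.{0} Aᵐᵒᵖ)
    (f : JX →ₗ[Aᵐᵒᵖ] X) : Prop :=
  InAddJ e JX ∧ ∀ (Z : ModuleCat.{0} Aᵐᵒᵖ), InAddJ e Z →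
    ∀ g : Z →ₗ[Aᵐᵒᵖ] X, ∃ h : Z →ₗ[Aᵐᵒᵖ] JX, f ∘ₗ h = g

theorem ext_iff_res {k R : Type} [Field k] [Ring R] [Linear k (ModuleCat.{0} R)]
    {M : ModuleCat.{0} R} (N : ModuleCat.{0} R) (P : ProjectiveResolution M) :
    Subsingleton (((Ext k (ModuleCat.{0} R) 1).obj (op M)).obj N) ↔
      ∀ g : P.complex.X 1 ⟶ N, P.complex.d 2 1 ≫ g = 0 → ∃ h : P.complex.X 0 ⟶ N,
        g = P.complex.d 1 0 ≫ h := by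
  rw [← ModuleCat.isZero_iff_subsingleton, (P.isoExt 1 N).isZero_iff,
    ← HomologicalComplex.exactAt_iff_isZero_homology,
    HomologicalComplex.exactAt_iff' _ 0 1 2 (by simp) (by simp),
    ShortComplex.moduleCat_exact_iff]
  constructor
  · intro h g hg
    obtain ⟨x, hx⟩ := h g hg
    exact ⟨x, hx.symm⟩
  · intro h g hg
    obtain ⟨x, hx⟩ := h g hg
    exact ⟨x, hx.symm⟩

/-- extension property from vanishing of Ext¹. -/
theorem ext_extend {k R : Type} [Field k] [Ring R] [Linear k (ModuleCat.{0} R)]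
    {M N : ModuleCat.{0} R}
    (h : Subsingleton (((Ext k (ModuleCat.{0} R) 1).obj (op M)).obj N))
    {P : Type} [AddCommGroup P] [Module R P] (p : P →ₗ[R] M) (hp : Function.Surjective p)
    (φ : LinearMap.ker p →ₗ[R] N) : ∃ ψ : P →ₗ[R] N, ∀ x, ψ x.1 = φ x := by
  obtain ⟨Q⟩ : Nonempty (ProjectiveResolution M) := HasProjectiveResolution.out
  rw [ext_iff_res N Q] at h
  haveI : Epi (ModuleCat.ofHom p) := (ModuleCat.epi_iff_surjective _).2 hp
  let π : Q.complex.X 0 ⟶ ModuleCat.of R M := Q.π.f 0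
  have hπ : Epi π := inferInstanceAs (Epi (Q.π.f 0))
  have hπs : Function.Surjective π := (ModuleCat.epi_iff_surjective _).1 hπ
  have hdπ : Q.complex.d 1 0 ≫ π = 0 := Q.complex_d_comp_π_f_zero
  let s : Q.complex.X 0 ⟶ ModuleCat.of R P := Projective.factorThru π (ModuleCat.ofHom p)
  have hs : s ≫ ModuleCat.ofHom p = π := Projective.factorThru_comp _ _
  have hs' : ∀ y, p (s y) = π y := fun y => by
    rw [← hs]; rfl
  have hex : ∀ y, π y = 0 → ∃ z, Q.complex.d 1 0 z = y := by
    have := (ShortComplex.mk _ _ hdπ).exact_of_g_is_cokernel Q.isColimitCokernelCofork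
    rw [ShortComplex.moduleCat_exact_iff] at this
    exact this
  let g : Q.complex.X 1 ⟶ N := ModuleCat.ofHom (φ ∘ₗ LinearMap.codRestrict (LinearMap.ker p)
    (s.hom ∘ₗ (Q.complex.d 1 0).hom) (fun z => by
      show p (s (Q.complex.d 1 0 z)) = 0
      rw [hs', ← ModuleCat.comp_apply, hdπ]; rfl))
  have hg : Q.complex.d 2 1 ≫ g = 0 := by
    ext z
    show φ _ = 0
    convert map_zero φ
    ext
    show s (Q.complex.d 1 0 (Q.complex.d 2 1 z)) = 0
    rw [← ModuleCat.comp_apply, ← ModuleCat.comp_apply, ← Category.assoc, Q.complex.d_comp_d]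
    simp
  obtain ⟨θ, hθ⟩ := h g hg
  have key : ∀ y (hy : s y ∈ LinearMap.ker p), θ y = φ ⟨s y, hy⟩ := by
    intro y hy
    have h0 : π y = 0 := by rw [← hs']; exact hy
    obtain ⟨z, rfl⟩ := hex y h0
    rw [← ModuleCat.comp_apply, ← hθ]; rfl
  -- surjection from `P0 × K`
  let q : (Q.complex.X 0 × LinearMap.ker p) →ₗ[R] P :=
    LinearMap.coprod s.hom (LinearMap.ker p).subtype
  have hq : Function.Surjective q := by
    intro x
    obtain ⟨y, hy⟩ := hπs (p x)
    refine ⟨(y, ⟨x - s y, ?_⟩), ?_⟩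
    · rw [LinearMap.mem_ker, map_sub, hs', hy, sub_self]
    · simp [q]
  let r : (Q.complex.X 0 × LinearMap.ker p) →ₗ[R] N := LinearMap.coprod θ.hom φ
  have hr : LinearMap.ker q ≤ LinearMap.ker r := by
    rintro ⟨y, x⟩ hyx
    have e : s y = -x.1 := by
      have : s y + x.1 = 0 := by simpa [q] using hyx
      exact eq_neg_of_add_eq_zero_left this
    have hy : s y ∈ LinearMap.ker p := by rw [e]; exact neg_mem x.2
    have := key y hy
    rw [LinearMap.mem_ker]
    show θ y + φ x = 0
    rw [this, ← map_add]
    convert map_zero φ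
    ext
    simp [e]
  refine ⟨(LinearMap.ker q).liftQ r hr ∘ₗ (q.quotKerEquivOfSurjective hq).symm.toLinearMap, ?_⟩
  intro x
  have : x.1 = q (0, x) := by simp [q]
  rw [this]
  have e2 : (q.quotKerEquivOfSurjective hq).symm (q (0, x)) = Submodule.Quotient.mk (0, x) := by
    rw [LinearEquiv.symm_apply_eq]; rfl
  show (LinearMap.ker q).liftQ r hr ((q.quotKerEquivOfSurjective hq).symm (q (0, x))) = _
  rw [e2]
  simp [r]

theorem ext_of_extend {k R : Type} [Field k] [Ring R] [Linear k (ModuleCat.{0} R)]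
    {M N : ModuleCat.{0} R}
    (h : ∀ (P : Type) [AddCommGroup P] [Module R P] [Module.Projective R P] (p : P →ₗ[R] M)
      (_ : Function.Surjective p)
      (φ : LinearMap.ker p →ₗ[R] N), ∃ ψ : P →ₗ[R] N, ∀ x, ψ x.1 = φ x) :
    Subsingleton (((Ext k (ModuleCat.{0} R) 1).obj (op M)).obj N) := by
  obtain ⟨Q⟩ : Nonempty (ProjectiveResolution M) := HasProjectiveResolution.out
  rw [ext_iff_res N Q]
  intro g hg
  let π : Q.complex.X 0 ⟶ ModuleCat.of R M := Q.π.f 0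
  have hπ : Epi π := inferInstanceAs (Epi (Q.π.f 0))
  have hπs : Function.Surjective π.hom := (ModuleCat.epi_iff_surjective _).1 hπ
  have hdπ : Q.complex.d 1 0 ≫ π = 0 := Q.complex_d_comp_π_f_zero
  have hex : ∀ y, π y = 0 → ∃ z, Q.complex.d 1 0 z = y := by
    have := (ShortComplex.mk _ _ hdπ).exact_of_g_is_cokernel Q.isColimitCokernelCofork
    rw [ShortComplex.moduleCat_exact_iff] at this
    exact this
  have hex1 : ∀ y, Q.complex.d 1 0 y = 0 → ∃ z, Q.complex.d 2 1 z = y := by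
    have := Q.exact_succ 0
    rw [ShortComplex.moduleCat_exact_iff] at this
    exact this
  haveI : Module.Projective R (Q.complex.X 0) :=
    (IsProjective.iff_projective (Q.complex.X 0)).2 (Q.projective 0)
  let d : Q.complex.X 1 →ₗ[R] LinearMap.ker π.hom :=
    LinearMap.codRestrict _ (Q.complex.d 1 0).hom (fun z => by
      show π (Q.complex.d 1 0 z) = 0
      rw [← ModuleCat.comp_apply, hdπ]; rfl)
  have hd : Function.Surjective d := by
    rintro ⟨y, hy⟩
    obtain ⟨z, hz⟩ := hex y hy
    exact ⟨z, Subtype.ext hz⟩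
  have hk : LinearMap.ker d ≤ LinearMap.ker g.hom := by
    intro z hz
    obtain ⟨u, rfl⟩ := hex1 z (congrArg Subtype.val (LinearMap.mem_ker.1 hz))
    show g (Q.complex.d 2 1 u) = 0
    rw [← ModuleCat.comp_apply, hg]; rfl
  obtain ⟨ψ, hψ⟩ := h (Q.complex.X 0) π.hom hπs
    ((LinearMap.ker d).liftQ g.hom hk ∘ₗ (d.quotKerEquivOfSurjective hd).symm.toLinearMap)
  refine ⟨ModuleCat.ofHom ψ, ?_⟩
  ext z
  have := hψ (d z)
  have e2 : (d.quotKerEquivOfSurjective hd).symm (d z) = Submodule.Quotient.mk z := by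
    rw [LinearEquiv.symm_apply_eq]; rfl
  simp only [LinearMap.comp_apply, LinearEquiv.coe_coe, e2] at this
  exact this.symm

theorem exists_trace {k R Q : Type} [Field k] [Ring R] [Algebra k R] [AddCommGroup Q]
    [Module k Q] [Module R Q] [IsScalarTower k R Q] [FiniteDimensional k Q]
    (hS : ∀ S : Submodule R Q, IsSimpleModule R S →
      Module.finrank k (S →ₗ[R] Q) ≤ Module.finrank k S) :
    ∃ t : Q →ₗ[k] k, ∀ U : Submodule R Q, (∀ u ∈ U, t u = 0) → U = ⊥ := by
  have hN : IsNoetherian R Q := isNoetherian_of_tower k inferInstance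
  have hA : IsArtinian R Q := isArtinian_of_tower k inferInstance
  let good : Set (Submodule R Q) :=
    {N | ∃ t : Q →ₗ[k] k, ∀ U ≤ N, (∀ u ∈ U, t u = 0) → U = ⊥}
  have hne : good.Nonempty := ⟨⊥, 0, fun U hU _ => le_bot_iff.1 hU⟩
  obtain ⟨N, ⟨t, ht⟩, hmax⟩ := WellFounded.has_min
    (wellFounded_gt (α := Submodule R Q)) good hne
  refine ⟨t, fun U hU => ?_⟩
  by_contra hU0
  obtain ⟨S, hSat, hSU⟩ := (IsAtomic.eq_bot_or_exists_atom_le U).resolve_left hU0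
  have hSN : ¬ S ≤ N := fun h => hSat.1 (ht S h fun u hu => hU u (hSU hu))
  have hdis : Disjoint S N := hSat.not_le_iff_disjoint.1 hSN
  have hsimp : IsSimpleModule R S := isSimpleModule_iff_isAtom.2 hSat
  -- counting
  have hfS : FiniteDimensional k S :=
    FiniteDimensional.of_injective (S.subtype.restrictScalars k) Subtype.val_injective
  have hfin : FiniteDimensional k (S →ₗ[R] Q) := by
    let ι : (S →ₗ[R] Q) →ₗ[k] (S →ₗ[k] Q) :=
      { toFun := fun f => f.restrictScalars k
        map_add' := fun _ _ => rfl
        map_smul' := fun _ _ => rfl }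
    exact FiniteDimensional.of_injective ι (fun f g h => by
      ext x; exact congrArg (fun F => F x) h)
  let inc : (S →ₗ[R] N) →ₗ[k] (S →ₗ[R] Q) :=
    { toFun := fun f => N.subtype ∘ₗ f
      map_add' := fun _ _ => rfl
      map_smul' := fun _ _ => rfl }
  have hinc : Function.Injective inc := fun f g h => by
    ext x; exact congrArg (fun F => F x) h
  have hfin2 : FiniteDimensional k (S →ₗ[R] N) := FiniteDimensional.of_injective inc hinc
  have hlt : Module.finrank k (S →ₗ[R] N) < Module.finrank k (S →ₗ[R] Q) := by
    refine lt_of_le_of_ne (LinearMap.finrank_le_finrank_of_injective hinc) fun heq => ?_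
    have hsurj := (LinearMap.injective_iff_surjective_of_finrank_eq_finrank heq).1 hinc
    obtain ⟨f, hf⟩ := hsurj S.subtype
    apply hSN
    intro x hx
    have : (inc f) ⟨x, hx⟩ = x := by rw [hf]; rfl
    rw [← this]
    exact (f ⟨x, hx⟩).2
  let dl : (S →ₗ[R] N) →ₗ[k] (S →ₗ[k] k) :=
    { toFun := fun f => t ∘ₗ (inc f).restrictScalars k
      map_add' := fun f g => by ext; simp
      map_smul' := fun c f => by ext; simp }
  have hns : ¬ Function.Surjective dl := by
    intro h
    have h1 := LinearMap.finrank_le_finrank_of_surjective h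
    have h2 : Module.finrank k (S →ₗ[k] k) = Module.finrank k S := Subspace.dual_finrank_eq
    have := hS S hsimp
    omega
  simp only [Function.Surjective, not_forall] at hns
  obtain ⟨h, hh⟩ := hns
  -- new functional
  let j : S →ₗ[k] (Q ⧸ N) := (N.mkQ ∘ₗ S.subtype).restrictScalars k
  have hj : LinearMap.ker j = ⊥ := by
    rw [LinearMap.ker_eq_bot']
    intro x hx
    have : (x : Q) ∈ N := (Submodule.Quotient.mk_eq_zero N).1 hx
    have := (Submodule.disjoint_def.1 hdis) x x.2 this
    exact Subtype.ext this
  obtain ⟨ρ, hρ⟩ := j.exists_leftInverse_of_injective hj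
  let t' : Q →ₗ[k] k := t + (h - t ∘ₗ S.subtype.restrictScalars k) ∘ₗ ρ ∘ₗ N.mkQ.restrictScalars k
  have ht'N : ∀ x ∈ N, t' x = t x := by
    intro x hx
    have : N.mkQ x = 0 := (Submodule.Quotient.mk_eq_zero N).2 hx
    show t x + (h - t ∘ₗ S.subtype.restrictScalars k) (ρ (N.mkQ x)) = t x
    rw [this]; simp
  have ht'S : ∀ x : S, t' x = h x := by
    intro x
    have : ρ (N.mkQ x) = x := LinearMap.congr_fun hρ x
    show t x + (h - t ∘ₗ S.subtype.restrictScalars k) (ρ (N.mkQ x)) = h x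
    rw [this]; simp
  have hgood : (N ⊔ S) ∈ good := by
    refine ⟨t', fun U hUle hUt => ?_⟩
    by_contra hU0
    obtain ⟨V, hVat, hVU⟩ := (IsAtomic.eq_bot_or_exists_atom_le U).resolve_left hU0
    have hVN : ¬ V ≤ N := fun hle => hVat.1 (ht V hle fun u hu => by
      rw [← ht'N u (hle hu)]; exact hUt u (hVU hu))
    have hVdis : Disjoint V N := hVat.not_le_iff_disjoint.1 hVN
    let c : (N × S) →ₗ[R] Q := LinearMap.coprod N.subtype S.subtype
    let W : Submodule R (N × S) := V.comap c
    let sn : W →ₗ[R] S := LinearMap.snd R N S ∘ₗ W.subtype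
    have hsn : Function.Injective sn := by
      rw [injective_iff_map_eq_zero]
      rintro ⟨⟨n, s⟩, hw⟩ h0
      have hs : s = 0 := h0
      subst hs
      have : (n : Q) ∈ V := by
        have : c (n, 0) ∈ V := hw
        simpa [c] using this
      have := (Submodule.disjoint_def.1 hVdis) n this n.2
      ext <;> simp [this]
    have hsn' : Function.Surjective sn := by
      rw [← LinearMap.range_eq_top]
      refine (eq_bot_or_eq_top (LinearMap.range sn)).resolve_left fun hb => ?_
      apply hVat.1
      rw [eq_bot_iff]
      intro v hv
      obtain ⟨n, hn, s, hs, rfl⟩ := Submodule.mem_sup.1 (hUle (hVU hv))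
      have hw : ((⟨n, hn⟩, ⟨s, hs⟩) : N × S) ∈ W := by
        show c _ ∈ V
        simpa [c] using hv
      have : sn ⟨_, hw⟩ = 0 := by
        have := LinearMap.mem_range_self sn ⟨_, hw⟩
        rw [hb] at this
        exact this
      have h0 : (⟨(⟨n, hn⟩, ⟨s, hs⟩), hw⟩ : W) = 0 := hsn (by rw [this, map_zero])
      have h1 := congrArg (fun z : W => c z.1) h0
      simpa [c] using h1
    let eq := LinearEquiv.ofBijective sn ⟨hsn, hsn'⟩
    let g : S →ₗ[R] N := LinearMap.fst R N S ∘ₗ W.subtype ∘ₗ eq.symm.toLinearMap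
    apply hh
    refine ⟨-g, ?_⟩
    ext s
    have hs2 : (eq.symm s).1.2 = s := eq.apply_symm_apply s
    have hmem : ((g s : Q) + (s : Q)) ∈ V := by
      have : c (eq.symm s).1 ∈ V := (eq.symm s).2
      have h3 : c (eq.symm s).1 = (g s : Q) + ((eq.symm s).1.2 : Q) := by simp [c, g]
      rw [h3, hs2] at this
      exact this
    have := hUt _ (hVU hmem)
    rw [map_add, ht'N _ (g s).2, ht'S] at this
    show t ((-g) s : N) = h s
    simp only [LinearMap.neg_apply, Submodule.coe_neg, map_neg]
    exact neg_eq_of_add_eq_zero_right this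
  exact hmax _ hgood (lt_of_le_of_ne le_sup_left fun he => hSN (he ▸ le_sup_right))

/-- perfect pairing facts -/
theorem trace_rep {k R Q : Type} [Field k] [Ring R] [Algebra k R] [AddCommGroup Q]
    [Module k Q] [Module R Q] [IsScalarTower k R Q] [FiniteDimensional k Q]
    [FiniteDimensional k R]
    (hd : Module.finrank k Q = Module.finrank k R) (t : Q →ₗ[k] k)
    (ht : ∀ U : Submodule R Q, (∀ u ∈ U, t u = 0) → U = ⊥)
    {M : Type} [AddCommGroup M] [Module k M] [Module R M] [IsScalarTower k R M]
    (ξ : M →ₗ[k] k) : ∃ f : M →ₗ[R] Q, ∀ m, t (f m) = ξ m := by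
  let B : Q →ₗ[k] (R →ₗ[k] k) :=
    { toFun := fun q => t ∘ₗ (LinearMap.toSpanSingleton R Q q).restrictScalars k
      map_add' := fun x y => by ext; simp
      map_smul' := fun c x => by
        ext r
        simp only [LinearMap.comp_apply, LinearMap.restrictScalars_apply,
          LinearMap.toSpanSingleton_apply, LinearMap.smul_apply, RingHom.id_apply]
        rw [smul_comm, map_smul] }
  have hB : Function.Injective B := by
    rw [injective_iff_map_eq_zero]
    intro q hq
    have := ht (LinearMap.range (LinearMap.toSpanSingleton R Q q)) (by
      rintro _ ⟨r, rfl⟩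
      exact LinearMap.congr_fun hq r)
    have h2 : LinearMap.toSpanSingleton R Q q 1 = 0 :=
      (Submodule.mem_bot R).1 (this ▸ LinearMap.mem_range_self _ 1)
    simpa using h2
  have hBs : Function.Surjective B :=
    (LinearMap.injective_iff_surjective_of_finrank_eq_finrank
      (hd.trans Subspace.dual_finrank_eq.symm)).1 hB
  let η : M → (R →ₗ[k] k) := fun m =>
    ξ ∘ₗ (LinearMap.toSpanSingleton R M m).restrictScalars k
  choose f hf using fun m => hBs (η m)
  have hf' : ∀ m r, t (r • f m) = ξ (r • m) := fun m r => LinearMap.congr_fun (hf m) r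
  refine ⟨{ toFun := f, map_add' := ?_, map_smul' := ?_ }, ?_⟩
  · intro x y
    apply hB
    ext r
    show t (r • f (x + y)) = t (r • (f x + f y))
    rw [hf', smul_add, smul_add, map_add, map_add, hf', hf']
  · intro s x
    apply hB
    ext r
    show t (r • f (s • x)) = t (r • (s • f x))
    rw [hf', smul_smul, smul_smul, hf']
  · intro m
    simpa using hf' m 1

theorem trace_inj {k R Q : Type} [Field k] [Ring R] [Algebra k R] [AddCommGroup Q]
    [Module k Q] [Module R Q]
    (t : Q →ₗ[k] k)
    (ht : ∀ U : Submodule R Q, (∀ u ∈ U, t u = 0) → U = ⊥)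
    {M : Type} [AddCommGroup M] [Module R M]
    (f g : M →ₗ[R] Q) (h : ∀ m, t (f m) = t (g m)) : f = g := by
  have := ht (LinearMap.range (f - g)) (by
    rintro _ ⟨m, rfl⟩
    simp [h])
  rw [LinearMap.range_eq_bot] at this
  exact sub_eq_zero.1 this

section CatPart

open Limits Pretriangulated

set_option linter.unusedSectionVars false
set_option linter.unusedVariables false

variable {C : Type} [Category.{0} C] [Preadditive C]

theorem map_biprod_tgt [HasFiniteBiproducts C] {D : Type} [Category.{0} D] [Preadditive D]
    (G : C ⥤ D) [G.Additive] {n : ℕ} {X : Fin n → C} {Z : D} (f : Z ⟶ G.obj (⨁ X))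
    (h : ∀ i, f ≫ G.map (biproduct.π X i) = 0) : f = 0 := by
  have : f = f ≫ G.map (𝟙 _) := by simp
  rw [this, ← biproduct.total, G.map_sum, Preadditive.comp_sum]
  refine Finset.sum_eq_zero fun i _ => ?_
  rw [G.map_comp, ← Category.assoc, h, zero_comp]

theorem map_biprod_src [HasFiniteBiproducts C] {D : Type} [Category.{0} D] [Preadditive D]
    (G : C ⥤ D) [G.Additive] {n : ℕ} {X : Fin n → C} {Z : D} (f : G.obj (⨁ X) ⟶ Z)
    (h : ∀ i, G.map (biproduct.ι X i) ≫ f = 0) : f = 0 := by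
  have : f = G.map (𝟙 _) ≫ f := by simp
  rw [this, ← biproduct.total, G.map_sum, Preadditive.sum_comp]
  refine Finset.sum_eq_zero fun i _ => ?_
  rw [G.map_comp, Category.assoc, h, comp_zero]

variable {k : Type} [Field k] [Linear k C]

/-- the functor `Hom(T, -)` on objects. -/
def FObj {A : Type} [Ring A] [Algebra k A] {T : C} (_ : A ≃ₐ[k] End T) (Y : C) : Type := T ⟶ Y

variable {A : Type} [Ring A] [Algebra k A] {T : C} (α : A ≃ₐ[k] End T)

/-- the isomorphism `A = Hom(T,T)`. -/
def am : A ≃ₗ[k] (T ⟶ T) := α.toLinearEquiv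

theorem am_mul (a b : A) : am α (a * b) = am α b ≫ am α a := α.map_mul a b

theorem am_one : am α 1 = 𝟙 T := α.map_one

instance (Y : C) : AddCommGroup (FObj α Y) := inferInstanceAs (AddCommGroup (T ⟶ Y))
instance (Y : C) : Module k (FObj α Y) := inferInstanceAs (Module k (T ⟶ Y))

/-- the underlying morphism. -/
def toH {Y : C} : FObj α Y ≃ₗ[k] (T ⟶ Y) := LinearEquiv.refl k _

instance (Y : C) : Module Aᵐᵒᵖ (FObj α Y) where
  smul r f := (toH α).symm (am α (MulOpposite.unop r) ≫ toH α f)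
  one_smul f := by
    apply (toH α).injective
    show am α (MulOpposite.unop 1) ≫ toH α f = toH α f
    rw [MulOpposite.unop_one, am_one, Category.id_comp]
  mul_smul r s f := by
    apply (toH α).injective
    show am α (MulOpposite.unop (r * s)) ≫ toH α f = am α (MulOpposite.unop r) ≫
      am α (MulOpposite.unop s) ≫ toH α f
    rw [MulOpposite.unop_mul, am_mul, Category.assoc]
  smul_zero r := Limits.comp_zero
  smul_add r f g := Preadditive.comp_add _ _ _ _ _ _
  add_smul r s f := by
    apply (toH α).injective
    show am α (MulOpposite.unop (r + s)) ≫ toH α f = am α (MulOpposite.unop r) ≫ toH α f +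
      am α (MulOpposite.unop s) ≫ toH α f
    rw [MulOpposite.unop_add, map_add, Preadditive.add_comp]
  zero_smul f := by
    apply (toH α).injective
    show am α (MulOpposite.unop 0) ≫ toH α f = 0
    rw [MulOpposite.unop_zero, map_zero, Limits.zero_comp]

theorem toH_smul {Y : C} (r : Aᵐᵒᵖ) (f : FObj α Y) :
    toH α (r • f) = am α (MulOpposite.unop r) ≫ toH α f := rfl

instance (Y : C) : IsScalarTower k Aᵐᵒᵖ (FObj α Y) where
  smul_assoc c r f := by
    apply (toH α).injective
    rw [toH_smul, map_smul, toH_smul, MulOpposite.unop_smul, map_smul, Linear.smul_comp]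

/-- the functor `Hom(T, -)` on morphisms. -/
def FMap {Y Y' : C} (γ : Y ⟶ Y') : FObj α Y →ₗ[Aᵐᵒᵖ] FObj α Y' where
  toFun f := (toH α).symm (toH α f ≫ γ)
  map_add' f g := Preadditive.add_comp _ _ _ _ _ _
  map_smul' r f := Category.assoc _ _ _

theorem toH_map {Y Y' : C} (γ : Y ⟶ Y') (f : FObj α Y) :
    toH α (FMap α γ f) = toH α f ≫ γ := rfl

/-- the direct sum `Tⁿ` -/
abbrev Tpow [HasFiniteBiproducts C] (T : C) (n : ℕ) : C := ⨁ (fun _ : Fin n => T)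

/-- `W ∈ add T` -/
def InAdd [HasFiniteBiproducts C] (T W : C) : Prop :=
  ∃ (n : ℕ) (s : W ⟶ Tpow T n) (r : Tpow T n ⟶ W), s ≫ r = 𝟙 W

theorem addT_zero [HasFiniteBiproducts C] {W Y : C} (hW : InAdd T W) (f : W ⟶ Y)
    (h : ∀ u : T ⟶ W, u ≫ f = 0) : f = 0 := by
  obtain ⟨n, s, r, hsr⟩ := hW
  have : r ≫ f = 0 := by
    apply map_biprod_src (𝟭 C)
    intro i
    show biproduct.ι _ i ≫ r ≫ f = 0
    rw [← Category.assoc]; exact h _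
  rw [← Category.id_comp f, ← hsr, Category.assoc, this, comp_zero]

variable [HasShift C ℤ] [HasZeroObject C] [∀ n : ℤ, (shiftFunctor C n).Additive]
  [Pretriangulated C] [HasFiniteBiproducts C]

theorem shift_zero {X Y : C} (h : ∀ f : X ⟶ Y, f = 0) (g : X⟦(1:ℤ)⟧ ⟶ Y⟦(1:ℤ)⟧) : g = 0 := by
  obtain ⟨f, rfl⟩ := (shiftFunctor C (1:ℤ)).map_surjective g
  rw [h f, Functor.map_zero]

theorem T_Tpow1 (hrig : ∀ f : T ⟶ T⟦(1:ℤ)⟧, f = 0) {n : ℕ} (f : T ⟶ (Tpow T n)⟦(1:ℤ)⟧) :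
    f = 0 := map_biprod_tgt _ f fun _ => hrig _

theorem add_rig (hrig : ∀ f : T ⟶ T⟦(1:ℤ)⟧, f = 0) {W : C} (hW : InAdd T W)
    (f : W ⟶ T⟦(1:ℤ)⟧) : f = 0 := addT_zero hW f fun _ => hrig _

theorem tcy2 {X Y Z : C} {f : X ⟶ Y} {g : Y ⟶ Z} {h : Z ⟶ X⟦(1:ℤ)⟧}
    (hT : Triangle.mk f g h ∈ distTriang C) {V : C} (x : V ⟶ Y) (hx : x ≫ g = 0) :
    ∃ y : V ⟶ X, x = y ≫ f := Triangle.coyoneda_exact₂ _ hT x hx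

theorem tcy3 {X Y Z : C} {f : X ⟶ Y} {g : Y ⟶ Z} {h : Z ⟶ X⟦(1:ℤ)⟧}
    (hT : Triangle.mk f g h ∈ distTriang C) {V : C} (x : V ⟶ Z) (hx : x ≫ h = 0) :
    ∃ y : V ⟶ Y, x = y ≫ g := Triangle.coyoneda_exact₃ _ hT x hx

theorem tcy1 {X Y Z : C} {f : X ⟶ Y} {g : Y ⟶ Z} {h : Z ⟶ X⟦(1:ℤ)⟧}
    (hT : Triangle.mk f g h ∈ distTriang C) {V : C} (x : V ⟶ X⟦(1:ℤ)⟧) (hx : x ≫ f⟦(1:ℤ)⟧' = 0) :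
    ∃ y : V ⟶ Z, x = y ≫ h := Triangle.coyoneda_exact₁ _ hT x hx

theorem ty2 {X Y Z : C} {f : X ⟶ Y} {g : Y ⟶ Z} {h : Z ⟶ X⟦(1:ℤ)⟧}
    (hT : Triangle.mk f g h ∈ distTriang C) {V : C} (x : Y ⟶ V) (hx : f ≫ x = 0) :
    ∃ y : Z ⟶ V, x = g ≫ y := Triangle.yoneda_exact₂ _ hT x hx

theorem ty3 {X Y Z : C} {f : X ⟶ Y} {g : Y ⟶ Z} {h : Z ⟶ X⟦(1:ℤ)⟧}
    (hT : Triangle.mk f g h ∈ distTriang C) {V : C} (x : Z ⟶ V) (hx : g ≫ x = 0) :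
    ∃ y : X⟦(1:ℤ)⟧ ⟶ V, x = h ≫ y := Triangle.yoneda_exact₃ _ hT x hx

theorem trot {X Y Z : C} {f : X ⟶ Y} {g : Y ⟶ Z} {h : Z ⟶ X⟦(1:ℤ)⟧}
    (hT : Triangle.mk f g h ∈ distTriang C) :
    Triangle.mk g h (-f⟦(1:ℤ)⟧') ∈ distTriang C := rot_of_distTriang _ hT

theorem approx (hfin : ∀ X Y : C, FiniteDimensional k (X ⟶ Y))
    (hrig : ∀ f : T ⟶ T⟦(1:ℤ)⟧, f = 0)
    (hct : ∀ X : C, (∀ f : T ⟶ X⟦(1:ℤ)⟧, f = 0) → InAdd T X) (Y : C) :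
    ∃ (n : ℕ) (q : Tpow T n ⟶ Y) (W : C) (i : W ⟶ Tpow T n) (h : Y ⟶ W⟦(1:ℤ)⟧),
      InAdd T W ∧ Triangle.mk i q h ∈ distTriang C ∧ ∀ u : T ⟶ Y, ∃ v, u = v ≫ q := by
  have := hfin T Y
  let b := Module.finBasis k (T ⟶ Y)
  let q : Tpow T (Module.finrank k (T ⟶ Y)) ⟶ Y := biproduct.desc b
  obtain ⟨W, i, h, hT⟩ := distinguished_cocone_triangle₁ q
  have hq : ∀ u : T ⟶ Y, ∃ v, u = v ≫ q := by
    intro u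
    refine ⟨∑ j, b.repr u j • biproduct.ι (fun _ => T) j, ?_⟩
    rw [Preadditive.sum_comp]
    conv_lhs => rw [← b.sum_repr u]
    refine Finset.sum_congr rfl fun j _ => ?_
    rw [Linear.smul_comp, biproduct.ι_desc]
  refine ⟨_, q, W, i, h, hct W fun f => ?_, hT, hq⟩
  obtain ⟨g, hg⟩ := tcy1 hT f (T_Tpow1 hrig _)
  obtain ⟨v, rfl⟩ := hq g
  have h0 : q ≫ h = 0 := comp_distTriang_mor_zero₂₃ _ hT
  rw [hg]
  show (v ≫ q) ≫ h = 0
  rw [Category.assoc, h0, comp_zero]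

theorem tpow_hom_eq {n : ℕ} {Y : C} (v : T ⟶ Tpow T n) (q : Tpow T n ⟶ Y) :
    (toH α).symm (v ≫ q) = ∑ j, MulOpposite.op ((am α).symm (v ≫ biproduct.π (fun _ => T) j)) •
      (toH α).symm (biproduct.ι (fun _ => T) j ≫ q) := by
  apply (toH α).injective
  have : v ≫ q = v ≫ 𝟙 _ ≫ q := by simp
  rw [LinearEquiv.apply_symm_apply, map_sum, this, ← biproduct.total, Preadditive.sum_comp,
    Preadditive.comp_sum]
  refine Finset.sum_congr rfl fun j _ => ?_
  rw [toH_smul, MulOpposite.unop_op, LinearEquiv.apply_symm_apply, LinearEquiv.apply_symm_apply]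
  simp [Category.assoc]

theorem F_full (hfin : ∀ X Y : C, FiniteDimensional k (X ⟶ Y))
    (hrig : ∀ f : T ⟶ T⟦(1:ℤ)⟧, f = 0)
    (hct : ∀ X : C, (∀ f : T ⟶ X⟦(1:ℤ)⟧, f = 0) → InAdd T X) {Y Y' : C}
    (g : FObj α Y →ₗ[Aᵐᵒᵖ] FObj α Y') : ∃ γ : Y ⟶ Y', g = FMap α γ := by
  obtain ⟨n, q, W, i, h, hW, hT, hq⟩ := approx (k := k) hfin hrig hct Y
  let x : Tpow T n ⟶ Y' := biproduct.desc fun j =>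
    toH α (g ((toH α).symm (biproduct.ι (fun _ => T) j ≫ q)))
  have hx : ∀ v : T ⟶ Tpow T n, v ≫ x = toH α (g ((toH α).symm (v ≫ q))) := by
    intro v
    have e1 := tpow_hom_eq α v q
    have e2 := tpow_hom_eq α v x
    apply (toH α).symm.injective
    rw [e2, e1, LinearEquiv.symm_apply_apply, map_sum]
    refine Finset.sum_congr rfl fun j _ => ?_
    rw [map_smul, biproduct.ι_desc, LinearEquiv.symm_apply_apply]
  have h0 : i ≫ q = 0 := comp_distTriang_mor_zero₁₂ _ hT
  have hix : i ≫ x = 0 := by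
    apply addT_zero hW
    intro u
    rw [← Category.assoc, hx]
    have : (u ≫ i) ≫ q = 0 := by rw [Category.assoc, h0, comp_zero]
    rw [this, map_zero, map_zero, map_zero]
  obtain ⟨γ, hγ⟩ := ty2 hT x hix
  refine ⟨γ, LinearMap.ext fun u => ?_⟩
  obtain ⟨v, hv⟩ := hq (toH α u)
  apply (toH α).injective
  have hγ' : x = q ≫ γ := hγ
  have := hx v
  rw [← hv, LinearEquiv.symm_apply_apply] at this
  rw [toH_map, hv, Category.assoc, ← hγ', this]

/-- `T[1][1]` -/
abbrev sh2 (X : C) : C := X⟦(1:ℤ)⟧⟦(1:ℤ)⟧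

/-- the shift of a morphism, twice -/
abbrev shm {X Y : C} (f : X ⟶ Y) : sh2 X ⟶ sh2 Y := f⟦(1:ℤ)⟧'⟦(1:ℤ)⟧'

theorem F_faith (hfin : ∀ X Y : C, FiniteDimensional k (X ⟶ Y))
    (hrig : ∀ f : T ⟶ T⟦(1:ℤ)⟧, f = 0)
    (hct : ∀ X : C, (∀ f : T ⟶ X⟦(1:ℤ)⟧, f = 0) → InAdd T X) (Y : C)
    (γ : Y ⟶ sh2 T) (h : ∀ u : T ⟶ Y, u ≫ γ = 0) : γ = 0 := by
  obtain ⟨n, q, W, i, h', hW, hT, hq⟩ := approx (k := k) hfin hrig hct Y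
  have : q ≫ γ = 0 := addT_zero ⟨n, 𝟙 _, 𝟙 _, by simp⟩ _ (fun u => by
    rw [← Category.assoc]; exact h _)
  obtain ⟨g, hg⟩ := ty3 hT γ this
  have hg' : γ = h' ≫ g := hg
  rw [hg', shift_zero (add_rig hrig hW) g]
  exact comp_zero

theorem F_dim (hfin : ∀ X Y : C, FiniteDimensional k (X ⟶ Y))
    (hrig : ∀ f : T ⟶ T⟦(1:ℤ)⟧, f = 0)
    (hct : ∀ X : C, (∀ f : T ⟶ X⟦(1:ℤ)⟧, f = 0) → InAdd T X)
    (hser : ∀ X Y : C, Module.finrank k (X ⟶ Y) = Module.finrank k (Y ⟶ sh2 X)) (Y : C) :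
    Module.finrank k (FObj α Y →ₗ[Aᵐᵒᵖ] FObj α (sh2 T)) ≤ Module.finrank k (FObj α Y) := by
  have := hfin Y (sh2 T)
  let Φ : (Y ⟶ sh2 T) →ₗ[k] (FObj α Y →ₗ[Aᵐᵒᵖ] FObj α (sh2 T)) :=
    { toFun := fun γ => FMap α γ
      map_add' := fun x y => LinearMap.ext fun u => Preadditive.comp_add _ _ _ _ _ _
      map_smul' := fun c x => LinearMap.ext fun u => Linear.comp_smul _ _ _ _ _ _ }
  have hΦ : Function.Surjective Φ := fun g => by
    obtain ⟨γ, h⟩ := F_full α hfin hrig hct g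
    exact ⟨γ, h.symm⟩
  refine (LinearMap.finrank_le_finrank_of_surjective hΦ).trans ?_
  exact (hser T Y).ge

theorem pres [FiniteDimensional k A] (hrig : ∀ f : T ⟶ T⟦(1:ℤ)⟧, f = 0)
    (M : Type) [AddCommGroup M] [Module Aᵐᵒᵖ M] [Module.Finite Aᵐᵒᵖ M] :
    ∃ (n m : ℕ) (c : Fin n → M) (w : Fin m → Fin n → A) (Y : C) (p : Tpow T n ⟶ Y)
      (h : Y ⟶ (Tpow T m)⟦(1:ℤ)⟧) (_ : M ≃ₗ[Aᵐᵒᵖ] FObj α Y),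
      Triangle.mk (biproduct.matrix (fun i j => am α (w i j))) p h ∈ distTriang C ∧
      (∀ x : M, ∃ b : Fin n → A, x = ∑ j, MulOpposite.op (b j) • c j) ∧
      (∀ b : Fin n → A, ∑ j, MulOpposite.op (b j) • c j = 0 ↔
        ∃ d : Fin m → A, ∀ j, b j = ∑ i, w i j * d i) := by
  have : IsNoetherianRing Aᵐᵒᵖ := isNoetherian_of_tower k inferInstance
  obtain ⟨n, π, hπ⟩ := Module.Finite.exists_fin' Aᵐᵒᵖ M
  obtain ⟨m, g, hg⟩ := Module.Finite.exists_fin' Aᵐᵒᵖ (LinearMap.ker π)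
  let c : Fin n → M := fun j => π (fun j' => if j = j' then 1 else 0)
  let w : Fin m → Fin n → A := fun i j =>
    MulOpposite.unop ((g (fun i' => if i = i' then 1 else 0)).1 j)
  have hπc : ∀ b, π b = ∑ j, b j • c j := fun b => LinearMap.pi_apply_eq_sum_univ π b
  have hgw : ∀ d j, (g d).1 j = ∑ i, d i * MulOpposite.op (w i j) := fun d j => by
    rw [LinearMap.pi_apply_eq_sum_univ g d]
    simp [w]
  have hrel : ∀ b : Fin n → Aᵐᵒᵖ, π b = 0 ↔
      ∃ d : Fin m → A, ∀ j, MulOpposite.unop (b j) = ∑ i, w i j * d i := by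
    intro b
    constructor
    · intro hb
      obtain ⟨d, hd⟩ := hg ⟨b, hb⟩
      refine ⟨fun i => MulOpposite.unop (d i), fun j => ?_⟩
      have : (g d).1 j = b j := by rw [hd]
      rw [← this, hgw]
      simp
    · rintro ⟨d, hd⟩
      have : b = (g (fun i => MulOpposite.op (d i))).1 := by
        funext j
        rw [hgw]
        apply MulOpposite.unop_injective
        rw [hd]
        simp
      rw [this]
      exact (g _).2
  obtain ⟨Y, p, h, hT⟩ := distinguished_cocone_triangle
    (biproduct.matrix (f := fun _ : Fin m => T) (g := fun _ : Fin n => T)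
      (fun i j => am α (w i j)))
  let y : Fin n → FObj α Y := fun j => (toH α).symm (biproduct.ι (fun _ => T) j ≫ p)
  let κ : (Fin n → Aᵐᵒᵖ) →ₗ[Aᵐᵒᵖ] FObj α Y := Fintype.linearCombination Aᵐᵒᵖ y
  have hκ : ∀ b, toH α (κ b) =
      biproduct.lift (fun j => am α (MulOpposite.unop (b j))) ≫ p := by
    intro b
    apply (toH α).symm.injective
    rw [tpow_hom_eq, LinearEquiv.symm_apply_apply]
    show ∑ j, b j • y j = _
    refine Finset.sum_congr rfl fun j _ => ?_
    rw [biproduct.lift_π, LinearEquiv.symm_apply_apply, MulOpposite.op_unop]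
  have hlift : ∀ v : T ⟶ Tpow T n, ∃ b : Fin n → Aᵐᵒᵖ,
      v = biproduct.lift (fun j => am α (MulOpposite.unop (b j))) := by
    intro v
    refine ⟨fun j => MulOpposite.op ((am α).symm (v ≫ biproduct.π _ j)), ?_⟩
    ext j
    simp
  have hκs : Function.Surjective κ := by
    intro u
    obtain ⟨v, hv⟩ := tcy3 hT (toH α u) (T_Tpow1 hrig _)
    obtain ⟨b, rfl⟩ := hlift v
    refine ⟨b, (toH α).injective ?_⟩
    rw [hκ]
    exact hv.symm
  have h0 : biproduct.matrix (f := fun _ : Fin m => T) (g := fun _ : Fin n => T)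
      (fun i j => am α (w i j)) ≫ p = 0 := comp_distTriang_mor_zero₁₂ _ hT
  have hmat : ∀ d : Fin m → A, biproduct.lift (fun i => am α (d i)) ≫
      biproduct.matrix (f := fun _ : Fin m => T) (g := fun _ : Fin n => T)
      (fun i j => am α (w i j)) = biproduct.lift (fun j => am α (∑ i, w i j * d i)) := by
    intro d
    ext j
    simp [biproduct.lift_matrix, am_mul]
  have hker : LinearMap.ker π = LinearMap.ker κ := by
    ext b
    rw [LinearMap.mem_ker, LinearMap.mem_ker, hrel]
    constructor
    · rintro ⟨d, hd⟩
      apply (toH α).injective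
      rw [hκ, map_zero]
      have : (fun j => am α (MulOpposite.unop (b j))) = fun j => am α (∑ i, w i j * d i) := by
        funext j; rw [hd]
      rw [this, ← hmat, Category.assoc, h0, comp_zero]
    · intro hb
      have hb' : biproduct.lift (fun j => am α (MulOpposite.unop (b j))) ≫ p = 0 := by
        rw [← hκ, hb, map_zero]
      obtain ⟨v, hv⟩ := tcy2 hT _ hb'
      have hv' : biproduct.lift (fun j => am α (MulOpposite.unop (b j))) = v ≫
        biproduct.matrix (f := fun _ : Fin m => T) (g := fun _ : Fin n => T)
          (fun i j => am α (w i j)) := hv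
      refine ⟨fun i => (am α).symm (v ≫ biproduct.π _ i), fun j => ?_⟩
      have hvv : v = biproduct.lift
          (fun i => am α ((am α).symm (v ≫ biproduct.π (fun _ => T) i))) := by
        ext i; simp
      rw [hvv, hmat] at hv'
      have := congrArg (· ≫ biproduct.π _ j) hv'
      simp only [biproduct.lift_π] at this
      exact (am α).injective this
  refine ⟨n, m, c, w, Y, p, h, (LinearMap.quotKerEquivOfSurjective π hπ).symm ≪≫ₗ
    Submodule.quotEquivOfEq _ _ hker ≪≫ₗ LinearMap.quotKerEquivOfSurjective κ hκs, hT, ?_, ?_⟩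
  · intro x
    obtain ⟨b, rfl⟩ := hπ x
    exact ⟨fun j => MulOpposite.unop (b j), hπc b⟩
  · intro b
    have := hrel (fun j => MulOpposite.op (b j))
    rw [hπc] at this
    exact this

end CatPart

section CatPart2

open Limits Pretriangulated

set_option linter.unusedSectionVars false
set_option linter.unusedVariables false

variable {C : Type} [Category.{0} C] [Preadditive C]
variable {k : Type} [Field k] [Linear k C]
variable {A : Type} [Ring A] [Algebra k A] {T : C} (α : A ≃ₐ[k] End T)
variable [HasShift C ℤ] [HasZeroObject C] [∀ n : ℤ, (shiftFunctor C n).Additive]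
  [Pretriangulated C] [HasFiniteBiproducts C]

theorem Tpow_Tpow1 (hrig : ∀ f : T ⟶ T⟦(1:ℤ)⟧, f = 0) {n m : ℕ}
    (f : Tpow T n ⟶ (Tpow T m)⟦(1:ℤ)⟧) : f = 0 :=
  addT_zero ⟨n, 𝟙 _, 𝟙 _, by simp⟩ f fun _ => T_Tpow1 hrig _

theorem Tpow_rig (hrig : ∀ f : T ⟶ T⟦(1:ℤ)⟧, f = 0) {n : ℕ}
    (f : Tpow T n ⟶ T⟦(1:ℤ)⟧) : f = 0 :=
  add_rig hrig ⟨n, 𝟙 _, 𝟙 _, by simp⟩ f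

theorem inj_res (hfin : ∀ X Y : C, FiniteDimensional k (X ⟶ Y))
    (hrig : ∀ f : T ⟶ T⟦(1:ℤ)⟧, f = 0)
    (hct : ∀ X : C, (∀ f : T ⟶ X⟦(1:ℤ)⟧, f = 0) → InAdd T X)
    (hser : ∀ X Y : C, Module.finrank k (X ⟶ Y) = Module.finrank k (Y ⟶ sh2 X)) (Y : C) :
    ∃ (W : C) (l r : ℕ) (a : W ⟶ Y) (u : Y ⟶ sh2 (Tpow T l)) (b : sh2 (Tpow T l) ⟶ W⟦(1:ℤ)⟧)
      (s : W⟦(1:ℤ)⟧ ⟶ sh2 (Tpow T r)) (s' : sh2 (Tpow T r) ⟶ W⟦(1:ℤ)⟧),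
      s ≫ s' = 𝟙 _ ∧ Triangle.mk a u b ∈ distTriang C ∧ (∀ f : T ⟶ W, f = 0) := by
  have := hfin Y (sh2 T)
  let v := Module.finBasis k (Y ⟶ sh2 T)
  let l := Module.finrank k (Y ⟶ sh2 T)
  let u : Y ⟶ sh2 (Tpow T l) := ∑ i : Fin l, v i ≫ shm (biproduct.ι (fun _ => T) i)
  have hv : ∀ j, v j = u ≫ shm (biproduct.π (fun _ => T) j) := by
    intro j
    rw [Preadditive.sum_comp, Finset.sum_eq_single j]
    · rw [Category.assoc, ← Functor.map_comp, ← Functor.map_comp, biproduct.ι_π_self]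
      simp
    · intro i _ hij
      rw [Category.assoc, ← Functor.map_comp, ← Functor.map_comp, biproduct.ι_π_ne _ hij]
      simp
    · simp
  have hu : ∀ g : Y ⟶ sh2 T, ∃ g', g = u ≫ g' := by
    intro g
    refine ⟨∑ j, v.repr g j • shm (biproduct.π (fun _ => T) j), ?_⟩
    rw [Preadditive.comp_sum]
    conv_lhs => rw [← v.sum_repr g]
    refine Finset.sum_congr rfl fun j _ => ?_
    rw [Linear.comp_smul, ← hv]
  obtain ⟨W, a, b, hT⟩ := distinguished_cocone_triangle₁ u
  have hau : a ≫ u = 0 := comp_distTriang_mor_zero₁₂ _ hT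
  have hW2 : ∀ f : W ⟶ sh2 T, f = 0 := by
    intro f
    have hb : b ≫ f⟦(1:ℤ)⟧' = 0 := by
      refine shift_zero (fun g => shift_zero (Tpow_rig hrig) g) _
    obtain ⟨g, hg⟩ := ty3 (trot hT) _ hb
    obtain ⟨g0, rfl⟩ := (shiftFunctor C (1:ℤ)).map_surjective g
    obtain ⟨g', rfl⟩ := hu g0
    apply (shiftFunctor C (1:ℤ)).map_injective
    rw [hg, Functor.map_zero, Preadditive.neg_comp, ← Functor.map_comp, ← Category.assoc, hau]
    simp
  have hW : ∀ f : T ⟶ W, f = 0 := by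
    have h1 := hser T W
    have : Subsingleton (W ⟶ sh2 T) := ⟨fun x y => (hW2 x).trans (hW2 y).symm⟩
    rw [Module.finrank_zero_of_subsingleton (R := k) (M := W ⟶ sh2 T)] at h1
    have := hfin T W
    have := Module.finrank_zero_iff.1 h1
    exact fun f => Subsingleton.elim _ _
  let e : (W⟦(-1:ℤ)⟧)⟦(1:ℤ)⟧ ≅ W := (shiftFunctorCompIsoId C (-1:ℤ) 1 (by simp)).app W
  obtain ⟨r, s, s', hs⟩ := hct (W⟦(-1:ℤ)⟧) (fun f => by
    rw [← Category.comp_id f, ← e.hom_inv_id, ← Category.assoc, hW (f ≫ e.hom), zero_comp])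
  refine ⟨W, l, r, a, u, b, e.inv⟦(1:ℤ)⟧' ≫ shm s, shm s' ≫ e.hom⟦(1:ℤ)⟧', ?_, hT, hW⟩
  rw [Category.assoc, ← Category.assoc (shm s)]
  have : shm s ≫ shm s' = 𝟙 _ := by
    rw [← Functor.map_comp, ← Functor.map_comp, hs]; simp
  rw [this, Category.id_comp, ← Functor.map_comp, e.inv_hom_id, CategoryTheory.Functor.map_id]

theorem cat_out [FiniteDimensional k A] (hfin : ∀ X Y : C, FiniteDimensional k (X ⟶ Y))
    (hrig : ∀ f : T ⟶ T⟦(1:ℤ)⟧, f = 0)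
    (hct : ∀ X : C, (∀ f : T ⟶ X⟦(1:ℤ)⟧, f = 0) → InAdd T X)
    (hser : ∀ X Y : C, Module.finrank k (X ⟶ Y) = Module.finrank k (Y ⟶ sh2 X))
    (M : Type) [AddCommGroup M] [Module Aᵐᵒᵖ M] [Module.Finite Aᵐᵒᵖ M] :
    ∃ (n m : ℕ) (c : Fin n → M) (w : Fin m → Fin n → A) (Y W : C) (l r : ℕ)
      (θ : M ≃ₗ[Aᵐᵒᵖ] FObj α Y) (u : Y ⟶ sh2 (Tpow T l)) (b : sh2 (Tpow T l) ⟶ W⟦(1:ℤ)⟧)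
      (a : W⟦(1:ℤ)⟧ ⟶ Y⟦(1:ℤ)⟧)
      (s : W⟦(1:ℤ)⟧ ⟶ sh2 (Tpow T r)) (s' : sh2 (Tpow T r) ⟶ W⟦(1:ℤ)⟧)
      (κ : FObj α (Y⟦(1:ℤ)⟧) →ₗ[Aᵐᵒᵖ] (Fin m → FObj α (sh2 T))),
      (∀ x : M, ∃ b : Fin n → A, x = ∑ j, MulOpposite.op (b j) • c j) ∧
      (∀ b : Fin n → A, ∑ j, MulOpposite.op (b j) • c j = 0 ↔
        ∃ d : Fin m → A, ∀ j, b j = ∑ i, w i j * d i) ∧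
      s ≫ s' = 𝟙 _ ∧
      (∀ x, FMap α u x = 0 → x = 0) ∧
      (∀ x, FMap α b x = 0 ↔ ∃ y, x = FMap α u y) ∧
      (∀ x, FMap α a x = 0 ↔ ∃ y, x = FMap α b y) ∧
      (∀ γ : sh2 T ⟶ Y⟦(1:ℤ)⟧, ∃ δ, γ = δ ≫ a) ∧
      (∀ z, κ z = 0 → z = 0) ∧
      (∀ x : Fin m → FObj α (sh2 T), (∃ z, x = κ z) ↔
        ∀ j, ∑ i, FMap α (shm (am α (w i j))) (x i) = 0) := by
  obtain ⟨n, m, c, w, Y, p, h, θ, hT, hgen, hrel⟩ := pres α hrig M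
  obtain ⟨W, l, r, a, u, b, s, s', hs, hT2, hW⟩ := inj_res (k := k) hfin hrig hct hser Y
  have h12 : a ≫ u = 0 := comp_distTriang_mor_zero₁₂ _ hT2
  have h23 : u ≫ b = 0 := comp_distTriang_mor_zero₂₃ _ hT2
  have h34 : b ≫ a⟦(1:ℤ)⟧' = 0 := comp_distTriang_mor_zero₃₁ _ hT2
  have hT3 := trot (trot hT2)
  have hk : ∀ {V V' V'' : C} {f : V ⟶ V'} {g : V' ⟶ V''} (h : f ≫ g = 0) (x : FObj α V),
      FMap α g (FMap α f x) = 0 := by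
    intro V V' V'' f g h x
    apply (toH α).injective
    rw [toH_map, toH_map, Category.assoc, h, comp_zero, map_zero]
  refine ⟨n, m, c, w, Y, W, l, r, θ, u, b, a⟦(1:ℤ)⟧', s, s',
    LinearMap.pi fun i => FMap α (h⟦(1:ℤ)⟧' ≫ shm (biproduct.π _ i)), hgen, hrel, hs, ?_, ?_, ?_,
    ?_, ?_, ?_⟩
  · intro x hx
    have hx' : toH α x ≫ u = 0 := by rw [← toH_map, hx, map_zero]
    obtain ⟨y, hy⟩ := tcy2 hT2 _ hx'
    apply (toH α).injective
    rw [hy, hW y, zero_comp, map_zero]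
  · intro x
    constructor
    · intro hx
      have hx' : toH α x ≫ b = 0 := by rw [← toH_map, hx, map_zero]
      obtain ⟨y, hy⟩ := tcy3 hT2 _ hx'
      exact ⟨(toH α).symm y, (toH α).injective hy⟩
    · rintro ⟨y, rfl⟩
      exact hk h23 y
  · intro x
    constructor
    · intro hx
      have hx' : toH α x ≫ a⟦(1:ℤ)⟧' = 0 := by rw [← toH_map, hx, map_zero]
      obtain ⟨y, hy⟩ := tcy3 (trot hT2) (toH α x) (by rw [Preadditive.comp_neg, hx', neg_zero])
      exact ⟨(toH α).symm y, (toH α).injective hy⟩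
    · rintro ⟨y, rfl⟩
      exact hk h34 y
  · intro γ
    have : γ ≫ (-u⟦(1:ℤ)⟧') = 0 := by
      refine shift_zero (fun g => shift_zero (fun g => T_Tpow1 hrig g) g) _
    obtain ⟨δ, hδ⟩ := tcy3 hT3 γ this
    exact ⟨-δ, by rw [hδ]; simp⟩
  · intro z hz
    have h1 : toH α z ≫ h⟦(1:ℤ)⟧' = 0 := by
      refine map_biprod_tgt (shiftFunctor C (1:ℤ) ⋙ shiftFunctor C (1:ℤ)) _ fun i => ?_
      have := congrArg (toH α) (congrFun hz i)
      rw [Category.assoc]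
      exact this
    have hT4 := trot (trot (trot hT))
    obtain ⟨y, hy⟩ := tcy3 hT4 (toH α z) (by rw [Preadditive.comp_neg, h1, neg_zero])
    apply (toH α).injective
    rw [hy, T_Tpow1 hrig y, zero_comp, map_zero]
  · intro x
    let X : T ⟶ sh2 (Tpow T m) := ∑ i, toH α (x i) ≫ shm (biproduct.ι (fun _ => T) i)
    have hX : ∀ i, X ≫ shm (biproduct.π (fun _ => T) i) = toH α (x i) := by
      intro j
      rw [Preadditive.sum_comp, Finset.sum_eq_single j]
      · rw [Category.assoc, ← Functor.map_comp, ← Functor.map_comp, biproduct.ι_π_self]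
        simp
      · intro i _ hij
        rw [Category.assoc, ← Functor.map_comp, ← Functor.map_comp, biproduct.ι_π_ne _ hij]
        simp
      · simp
    have e1 : (∃ z, x = (LinearMap.pi fun i => FMap α (h⟦(1:ℤ)⟧' ≫ shm (biproduct.π _ i))) z) ↔
        ∃ z, X = z ≫ h⟦(1:ℤ)⟧' := by
      constructor
      · rintro ⟨z, hz⟩
        refine ⟨toH α z, ?_⟩
        rw [← sub_eq_zero]
        refine map_biprod_tgt (shiftFunctor C (1:ℤ) ⋙ shiftFunctor C (1:ℤ)) _ fun i => ?_
        rw [Preadditive.sub_comp, sub_eq_zero]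
        refine (hX i).trans ?_
        rw [hz, Category.assoc]
        rfl
      · rintro ⟨z, hz⟩
        refine ⟨(toH α).symm z, ?_⟩
        funext i
        apply (toH α).injective
        rw [← hX, hz, Category.assoc]
        rfl
    rw [e1]
    let μ : Tpow T m ⟶ Tpow T n := biproduct.matrix (fun i j => am α (w i j))
    have hcomp : ∀ j, (X ≫ shm μ) ≫ shm (biproduct.π (fun _ => T) j) =
        toH α (∑ i, FMap α (shm (am α (w i j))) (x i)) := by
      intro j
      rw [Preadditive.sum_comp, Preadditive.sum_comp, map_sum]
      refine Finset.sum_congr rfl fun i _ => ?_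
      rw [toH_map, Category.assoc, Category.assoc, ← Functor.map_comp, ← Functor.map_comp,
        ← Functor.map_comp, ← Functor.map_comp]
      congr 4
      simp [μ]
    have hT4 := trot (trot (trot hT))
    have hz : h ≫ μ⟦(1:ℤ)⟧' = 0 := comp_distTriang_mor_zero₃₁ _ hT
    constructor
    · rintro ⟨z, hz'⟩ j
      apply (toH α).injective
      rw [← hcomp, hz', map_zero]
      have : h⟦(1:ℤ)⟧' ≫ shm μ = 0 := by
        rw [← Functor.map_comp, hz, Functor.map_zero]
      rw [Category.assoc z, this, comp_zero, zero_comp]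
    · intro hj
      have h0 : X ≫ shm μ = 0 := by
        refine map_biprod_tgt (shiftFunctor C (1:ℤ) ⋙ shiftFunctor C (1:ℤ)) _ fun i => ?_
        refine (hcomp i).trans ?_
        rw [hj, map_zero]
      obtain ⟨y, hy⟩ := tcy3 (trot hT4) X (by
        rw [Functor.map_neg, neg_neg]; exact h0)
      exact ⟨-y, by rw [hy]; simp⟩

end CatPart2

section CatPart3

open Limits Pretriangulated

set_option linter.unusedSectionVars false
set_option linter.unusedVariables false

variable {C : Type} [Category.{0} C] [Preadditive C]
variable {k : Type} [Field k] [Linear k C]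
variable {A : Type} [Ring A] [Algebra k A] {T : C} (α : A ≃ₐ[k] End T)
variable [HasShift C ℤ] [HasZeroObject C] [∀ n : ℤ, (shiftFunctor C n).Additive]
  [Pretriangulated C] [HasFiniteBiproducts C]

theorem F_fd (hfin : ∀ X Y : C, FiniteDimensional k (X ⟶ Y)) (Y : C) :
    FiniteDimensional k (FObj α Y) := hfin T Y

theorem Q_rank (hser : ∀ X Y : C, Module.finrank k (X ⟶ Y) = Module.finrank k (Y ⟶ sh2 X)) :
    Module.finrank k (FObj α (sh2 T)) = Module.finrank k Aᵐᵒᵖ := by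
  rw [← LinearEquiv.finrank_eq (MulOpposite.opLinearEquiv k : A ≃ₗ[k] Aᵐᵒᵖ),
    LinearEquiv.finrank_eq (am α)]
  exact (hser T T).symm

theorem trace_out [FiniteDimensional k A] (hfin : ∀ X Y : C, FiniteDimensional k (X ⟶ Y))
    (hrig : ∀ f : T ⟶ T⟦(1:ℤ)⟧, f = 0)
    (hct : ∀ X : C, (∀ f : T ⟶ X⟦(1:ℤ)⟧, f = 0) → InAdd T X)
    (hser : ∀ X Y : C, Module.finrank k (X ⟶ Y) = Module.finrank k (Y ⟶ sh2 X)) :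
    ∃ t : FObj α (sh2 T) →ₗ[k] k, ∀ U : Submodule Aᵐᵒᵖ (FObj α (sh2 T)),
      (∀ u ∈ U, t u = 0) → U = ⊥ := by
  have := F_fd α hfin (sh2 T)
  refine exists_trace fun S hS => ?_
  have : Module.Finite Aᵐᵒᵖ S := inferInstance
  obtain ⟨n, m, c, w, Y, p, h, θ, -⟩ := pres α hrig S
  have e1 : Module.finrank k S = Module.finrank k (FObj α Y) :=
    LinearEquiv.finrank_eq (θ.restrictScalars k)
  let Θ : (S →ₗ[Aᵐᵒᵖ] FObj α (sh2 T)) ≃ₗ[k] (FObj α Y →ₗ[Aᵐᵒᵖ] FObj α (sh2 T)) :=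
    { toFun := fun f => f ∘ₗ θ.symm.toLinearMap
      invFun := fun f => f ∘ₗ θ.toLinearMap
      map_add' := fun f g => rfl
      map_smul' := fun c f => rfl
      left_inv := fun f => by ext x; simp
      right_inv := fun f => by ext x; simp }
  rw [e1, LinearEquiv.finrank_eq Θ]
  exact F_dim α hfin hrig hct hser Y

theorem sigma_out [FiniteDimensional k A] (hfin : ∀ X Y : C, FiniteDimensional k (X ⟶ Y))
    (hrig : ∀ f : T ⟶ T⟦(1:ℤ)⟧, f = 0)
    (hct : ∀ X : C, (∀ f : T ⟶ X⟦(1:ℤ)⟧, f = 0) → InAdd T X)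
    (hser : ∀ X Y : C, Module.finrank k (X ⟶ Y) = Module.finrank k (Y ⟶ sh2 X))
    (t : FObj α (sh2 T) →ₗ[k] k) (ht : ∀ U : Submodule Aᵐᵒᵖ (FObj α (sh2 T)),
      (∀ u ∈ U, t u = 0) → U = ⊥) :
    ∃ σ : A ≃+* A, ∀ a q, t (FMap α (shm (am α a)) q) = t (MulOpposite.op (σ a) • q) := by
  have hQ := F_fd α hfin (sh2 T)
  have hd := Q_rank α hser
  let β : A →ₗ[k] (FObj α (sh2 T) →ₗ[k] k) :=
    { toFun := fun b => t ∘ₗ Algebra.lsmul k k (FObj α (sh2 T)) (MulOpposite.op b)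
      map_add' := fun x y => by
        ext q; simp
      map_smul' := fun c x => by
        ext q; simp }
  have hβ : ∀ (b : A) (q), β b q = t (MulOpposite.op b • q) := fun b q => rfl
  have hinj : Function.Injective β := by
    rw [← LinearMap.ker_eq_bot, LinearMap.ker_eq_bot']
    intro b hb
    have : MulOpposite.op b = 0 := by
      rw [← Module.forall_dual_apply_eq_zero_iff k]
      intro ξ
      obtain ⟨f, hf⟩ := trace_rep hd t ht ξ
      rw [← hf]
      have : f (MulOpposite.op b) = MulOpposite.op b • f 1 := by
        rw [← map_smul]; simp
      rw [this, ← hβ, hb]; rfl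
    simpa using this
  have hsurj : Function.Surjective β := by
    have : Module.finrank k A = Module.finrank k (FObj α (sh2 T) →ₗ[k] k) := by
      rw [Subspace.dual_finrank_eq (K := k) (V := FObj α (sh2 T)), hd,
        ← LinearEquiv.finrank_eq (MulOpposite.opLinearEquiv k : A ≃ₗ[k] Aᵐᵒᵖ)]
    exact (LinearMap.injective_iff_surjective_of_finrank_eq_finrank this).1 hinj
  have hex : ∀ a : A, ∃ b : A, ∀ q, t (FMap α (shm (am α a)) q) = t (MulOpposite.op b • q) := by
    intro a
    obtain ⟨b, hb⟩ := hsurj (t ∘ₗ (FMap α (shm (am α a))).restrictScalars k)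
    exact ⟨b, fun q => (LinearMap.congr_fun hb q).symm⟩
  choose σ hσ using hex
  have huniq : ∀ b b' : A, (∀ q, t (MulOpposite.op b • q) = t (MulOpposite.op b' • q)) → b = b' :=
    fun b b' h => hinj (LinearMap.ext h)
  have hadd : ∀ a b, σ (a + b) = σ a + σ b := by
    intro a b
    apply huniq
    intro q
    rw [← hσ, MulOpposite.op_add, add_smul, map_add t, ← hσ, ← hσ, ← map_add t]
    congr 1
    apply (toH α).injective
    rw [map_add (am α), map_add (toH α), toH_map, toH_map, toH_map, ← Preadditive.comp_add]
    congr 1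
    simp only [shm, Functor.map_add]
  have hmul : ∀ a b, σ (a * b) = σ a * σ b := by
    intro a b
    apply huniq
    intro q
    rw [← hσ, MulOpposite.op_mul, mul_smul, ← hσ, map_smul, ← hσ]
    congr 1
    apply (toH α).injective
    rw [toH_map, toH_map, toH_map, Category.assoc, ← Functor.map_comp, ← Functor.map_comp, am_mul]
  have hbij : Function.Bijective σ := by
    constructor
    · have h0 : ∀ a, σ a = 0 → a = 0 := by
        intro a ha
        have : FMap α (shm (am α a)) = 0 := by
          apply trace_inj t ht
          intro q
          rw [hσ, ha]; simp
        have h2 : shm (am α a) = 0 := by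
          apply F_faith (k := k) hfin hrig hct
          intro u
          have := congrArg (toH α) (LinearMap.congr_fun this ((toH α).symm u))
          rw [toH_map, LinearEquiv.apply_symm_apply] at this
          rw [this]; simp
        apply (am α).injective
        rw [map_zero]
        apply (shiftFunctor C (1:ℤ)).map_injective
        apply (shiftFunctor C (1:ℤ)).map_injective
        rw [Functor.map_zero, Functor.map_zero]
        exact h2
      intro a b hab
      have h3 : σ (a - b) + σ b = σ a := by rw [← hadd, sub_add_cancel]
      rw [hab, add_eq_right] at h3
      exact sub_eq_zero.1 (h0 _ h3)
    · intro b
      obtain ⟨f, hf⟩ := trace_rep hd t ht (β b)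
      obtain ⟨γ, rfl⟩ := F_full α hfin hrig hct f
      obtain ⟨γ1, rfl⟩ := (shiftFunctor C (1:ℤ)).map_surjective γ
      obtain ⟨γ2, rfl⟩ := (shiftFunctor C (1:ℤ)).map_surjective γ1
      refine ⟨(am α).symm γ2, huniq _ _ fun q => ?_⟩
      rw [← hσ, LinearEquiv.apply_symm_apply, hf]
      rfl
  exact ⟨RingEquiv.ofBijective (⟨⟨⟨σ, by
    obtain ⟨e, he⟩ := hbij.2 1
    have := hmul e 1
    rw [mul_one, he, one_mul] at this
    exact this.symm⟩, hmul⟩, by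
      have := hadd 0 0
      rw [add_zero] at this
      exact left_eq_add.1 this, hadd⟩ : A →+* A) hbij, hσ⟩

theorem e_iff [IsIdempotentComplete C] [FiniteDimensional k A]
    (hfin : ∀ X Y : C, FiniteDimensional k (X ⟶ Y))
    (hrig : ∀ f : T ⟶ T⟦(1:ℤ)⟧, f = 0)
    (hct : ∀ X : C, (∀ f : T ⟶ X⟦(1:ℤ)⟧, f = 0) → InAdd T X)
    (hser : ∀ X Y : C, Module.finrank k (X ⟶ Y) = Module.finrank k (Y ⟶ sh2 X))
    (t : FObj α (sh2 T) →ₗ[k] k) (ht : ∀ U : Submodule Aᵐᵒᵖ (FObj α (sh2 T)),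
      (∀ u ∈ U, t u = 0) → U = ⊥)
    (σ : A → A) (hσ : ∀ a q, t (FMap α (shm (am α a)) q) = t (MulOpposite.op (σ a) • q))
    (e : A) (he : IsIdempotentElem e)
    (M : Type) [AddCommGroup M] [Module Aᵐᵒᵖ M] [Module.Finite Aᵐᵒᵖ M] :
    (∀ x : M, MulOpposite.op e • x = 0) ↔ (∀ x : M, MulOpposite.op (σ e) • x = 0) := by
  have hQ := F_fd α hfin (sh2 T)
  have hd := Q_rank α hser
  obtain ⟨n, m, c, w, Y, p, h, θ, -⟩ := pres α hrig M
  have hθ : ∀ b : A, (∀ x : M, MulOpposite.op b • x = 0) ↔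
      (∀ x : FObj α Y, MulOpposite.op b • x = 0) := by
    intro b
    constructor
    · intro hb x
      apply θ.symm.injective
      rw [map_smul, hb, map_zero]
    · intro hb x
      apply θ.injective
      rw [map_smul, hb, map_zero]
  rw [hθ, hθ]
  obtain ⟨Te, i, q, hiq, hqi⟩ := IsIdempotentComplete.idempotents_split T (am α e)
    (by rw [← am_mul, he])
  have s1 : (∀ x : FObj α Y, MulOpposite.op e • x = 0) ↔ ∀ g : Te ⟶ Y, g = 0 := by
    constructor
    · intro H g
      have := congrArg (toH α) (H ((toH α).symm (q ≫ g)))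
      rw [toH_smul, MulOpposite.unop_op, LinearEquiv.apply_symm_apply, map_zero, ← hqi] at this
      have h2 := congrArg (i ≫ ·) this
      simp only [comp_zero, ← Category.assoc] at h2
      rw [hiq, Category.id_comp, hiq, Category.id_comp] at h2
      exact h2
    · intro H x
      apply (toH α).injective
      rw [toH_smul, MulOpposite.unop_op, ← hqi, Category.assoc, H (i ≫ toH α x), comp_zero,
        map_zero]
  have hiff0 : ∀ X Y : C, (∀ g : X ⟶ Y, g = 0) ↔ Module.finrank k (X ⟶ Y) = 0 := by
    intro X Y
    have := hfin X Y
    rw [Module.finrank_zero_iff]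
    exact ⟨fun H => ⟨fun a b => (H a).trans (H b).symm⟩, fun H g => Subsingleton.elim _ _⟩
  have s2 : (∀ g : Te ⟶ Y, g = 0) ↔ ∀ g : Y ⟶ sh2 Te, g = 0 := by
    rw [hiff0, hiff0, hser]
  have hqi2 : shm q ≫ shm i = shm (am α e) := by
    rw [← Functor.map_comp, ← Functor.map_comp, hqi]
  have hiq2 : shm i ≫ shm q = 𝟙 _ := by
    rw [← Functor.map_comp, ← Functor.map_comp, hiq]; simp
  have s3 : (∀ g : Y ⟶ sh2 Te, g = 0) ↔ ∀ g : Y ⟶ sh2 T, g ≫ shm (am α e) = 0 := by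
    constructor
    · intro H g
      rw [← hqi2, ← Category.assoc, H (g ≫ shm q), zero_comp]
    · intro H g
      have := congrArg (· ≫ shm q) (H (g ≫ shm i))
      simp only [zero_comp, ← hqi2, Category.assoc] at this
      rw [hiq2, Category.comp_id, hiq2, Category.comp_id] at this
      exact this
  have s4 : (∀ g : Y ⟶ sh2 T, g ≫ shm (am α e) = 0) ↔
      ∀ f : FObj α Y →ₗ[Aᵐᵒᵖ] FObj α (sh2 T), FMap α (shm (am α e)) ∘ₗ f = 0 := by
    constructor
    · intro H f
      obtain ⟨γ, rfl⟩ := F_full α hfin hrig hct f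
      ext x
      apply (toH α).injective
      rw [LinearMap.comp_apply, toH_map, toH_map, Category.assoc, H, comp_zero]
      simp
    · intro H g
      apply F_faith (k := k) hfin hrig hct
      intro u
      have := congrArg (toH α) (LinearMap.congr_fun (H (FMap α g)) ((toH α).symm u))
      rw [LinearMap.comp_apply, toH_map, toH_map, Category.assoc,
        LinearEquiv.apply_symm_apply] at this
      rw [this]; simp
  have s5 : (∀ f : FObj α Y →ₗ[Aᵐᵒᵖ] FObj α (sh2 T), FMap α (shm (am α e)) ∘ₗ f = 0) ↔
      ∀ x : FObj α Y, MulOpposite.op (σ e) • x = 0 := by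
    constructor
    · intro H x
      rw [← Module.forall_dual_apply_eq_zero_iff k]
      intro ξ
      obtain ⟨f, hf⟩ := trace_rep hd t ht ξ
      rw [← hf, map_smul, ← hσ]
      have := LinearMap.congr_fun (H f) x
      rw [LinearMap.comp_apply] at this
      rw [this]; simp
    · intro H f
      apply trace_inj t ht
      intro x
      rw [LinearMap.comp_apply, hσ, ← map_smul, H]
      simp
  rw [s1, s2, s3, s4, s5]

end CatPart3

section ModPart

theorem genIdeal_left {A : Type} [Ring A] (e a x : A) (hx : x ∈ genIdeal e) :
    a * x ∈ genIdeal e := by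
  unfold genIdeal at hx ⊢
  induction hx using Submodule.span_induction with
  | mem x hx =>
    obtain ⟨b, rfl⟩ := hx
    exact Submodule.subset_span ⟨a * b, by rw [mul_assoc]⟩
  | zero => simp
  | add x y _ _ hx hy => rw [mul_add]; exact add_mem hx hy
  | smul r x _ hx =>
    have : a * r • x = r • (a * x) := by
      rw [MulOpposite.smul_eq_mul_unop, MulOpposite.smul_eq_mul_unop, mul_assoc]
    rw [this]; exact Submodule.smul_mem _ _ hx

theorem self_mem_genIdeal {A : Type} [Ring A] (e : A) : e ∈ genIdeal e :=
  Submodule.subset_span ⟨1, by rw [one_mul]⟩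

theorem genIdeal_mono {A : Type} [Ring A] (e f : A) (h : f ∈ genIdeal e) :
    genIdeal f ≤ genIdeal e := by
  refine Submodule.span_le.2 ?_
  rintro _ ⟨b, rfl⟩
  exact genIdeal_left e b f h

theorem genIdeal_map {A : Type} [Ring A] (σ : A ≃+* A) (e x : A) (hx : x ∈ genIdeal e) :
    σ x ∈ genIdeal (σ e) := by
  unfold genIdeal at hx
  induction hx using Submodule.span_induction with
  | mem x hx =>
    obtain ⟨b, rfl⟩ := hx
    rw [map_mul]
    exact Submodule.subset_span ⟨σ b, rfl⟩
  | zero => simp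
  | add x y _ _ hx hy => rw [map_add]; exact add_mem hx hy
  | smul r x _ hx =>
    have : σ (r • x) = MulOpposite.op (σ (MulOpposite.unop r)) • σ x := by
      rw [MulOpposite.smul_eq_mul_unop, MulOpposite.smul_eq_mul_unop, map_mul,
        MulOpposite.unop_op]
    rw [this]; exact Submodule.smul_mem _ _ hx

theorem genIdeal_sigma {A : Type} [Ring A] (σ : A ≃+* A) (e : A) (h : σ e ∈ genIdeal e)
    (h' : e ∈ genIdeal (σ e)) (x : A) : σ x ∈ genIdeal e ↔ x ∈ genIdeal e := by
  constructor
  · intro hx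
    have h1 := genIdeal_map σ.symm _ _ (genIdeal_mono _ _ h' hx)
    simpa using h1
  · intro hx
    exact genIdeal_mono _ _ h (genIdeal_map σ _ _ hx)

/-- injectivity of `Q`. -/
theorem Q_ext {k R Q : Type} [Field k] [Ring R] [Algebra k R] [AddCommGroup Q]
    [Module k Q] [Module R Q] [IsScalarTower k R Q] [FiniteDimensional k Q]
    [FiniteDimensional k R]
    (hd : Module.finrank k Q = Module.finrank k R) (t : Q →ₗ[k] k)
    (ht : ∀ U : Submodule R Q, (∀ u ∈ U, t u = 0) → U = ⊥)
    {P : Type} [AddCommGroup P] [Module k P] [Module R P] [IsScalarTower k R P]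
    (N : Submodule R P) (f : N →ₗ[R] Q) : ∃ g : P →ₗ[R] Q, ∀ x, g x.1 = f x := by
  let ξ : (N.restrictScalars k) →ₗ[k] k := t ∘ₗ (f.restrictScalars k)
  obtain ⟨ξ', hξ'⟩ := LinearMap.exists_extend ξ
  obtain ⟨g, hg⟩ := trace_rep hd t ht ξ'
  refine ⟨g, fun x => ?_⟩
  have : g ∘ₗ N.subtype = f := by
    apply trace_inj t ht
    intro x
    show t (g x.1) = _
    rw [hg]
    exact LinearMap.congr_fun hξ' x
  exact LinearMap.congr_fun this x

/-- factoring an `R`-map through an injective map. -/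
theorem factor_inj {R M N L : Type} [Ring R] [AddCommGroup M] [Module R M] [AddCommGroup N]
    [Module R N] [AddCommGroup L] [Module R L] (κ : N →ₗ[R] L) (hκ : ∀ z, κ z = 0 → z = 0)
    (f : M →ₗ[R] L) (hf : ∀ x, ∃ z, f x = κ z) : ∃ g : M →ₗ[R] N, ∀ x, κ (g x) = f x := by
  have hinj : Function.Injective κ := by
    rw [← LinearMap.ker_eq_bot, LinearMap.ker_eq_bot']; exact hκ
  refine ⟨(LinearEquiv.ofInjective κ hinj).symm.toLinearMap ∘ₗ
    LinearMap.codRestrict (LinearMap.range κ) f (fun x => ?_), fun x => ?_⟩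
  · obtain ⟨z, hz⟩ := hf x
    exact ⟨z, hz.symm⟩
  · have := congrArg Subtype.val ((LinearEquiv.ofInjective κ hinj).apply_symm_apply
      (LinearMap.codRestrict (LinearMap.range κ) f (fun x => by
        obtain ⟨z, hz⟩ := hf x
        exact ⟨z, hz.symm⟩) x))
    exact this

theorem final_chase {R : Type} [Ring R] {A0 I0 I1 Z X P : Type} [AddCommGroup A0] [Module R A0]
    [AddCommGroup I0] [Module R I0] [AddCommGroup I1] [Module R I1]
    [AddCommGroup Z] [Module R Z] [AddCommGroup X] [Module R X]
    [AddCommGroup P] [Module R P] [Module.Projective R P] (J : Submodule R A0)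
    (ι : J →ₗ[R] I0) (hι : ∀ x, ι x = 0 → x = 0) (d0 : I0 →ₗ[R] I1)
    (h0 : ∀ x, d0 x = 0 ↔ ∃ y, x = ι y) (d1 : I1 →ₗ[R] Z) (h1 : ∀ x, d1 x = 0 ↔ ∃ y, x = d0 y)
    (ιA : A0 →ₗ[R] I0) (hιA : ∀ y : J, ιA y.1 = ι y)
    (p : P →ₗ[R] X) (hp : Function.Surjective p)
    (hI1 : ∀ f : LinearMap.ker p →ₗ[R] I1, ∃ g : P →ₗ[R] I1, ∀ x, g x.1 = f x)
    (hlift : ∀ f : X →ₗ[R] Z, ∃ f' : X →ₗ[R] I1, ∀ x, d1 (f' x) = f x)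
    (hA : ∀ f : LinearMap.ker p →ₗ[R] A0, ∃ g : P →ₗ[R] A0, ∀ x, g x.1 = f x)
    (φ : LinearMap.ker p →ₗ[R] (A0 ⧸ J)) : ∃ g : P →ₗ[R] (A0 ⧸ J), ∀ x, g x.1 = φ x := by
  let dB : (A0 ⧸ J) →ₗ[R] I1 := J.liftQ (d0 ∘ₗ ιA) (fun y hy => by
    rw [LinearMap.mem_ker, LinearMap.comp_apply, h0]
    exact ⟨⟨y, hy⟩, hιA ⟨y, hy⟩⟩)
  have hdB : ∀ a, dB (J.mkQ a) = d0 (ιA a) := fun a => rfl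
  have hdB' : ∀ b, d1 (dB b) = 0 := by
    intro b
    obtain ⟨a, rfl⟩ := J.mkQ_surjective b
    rw [hdB, h1]
    exact ⟨_, rfl⟩
  obtain ⟨Φ, hΦ⟩ := hI1 (dB ∘ₗ φ)
  have hle : LinearMap.ker p ≤ LinearMap.ker (d1 ∘ₗ Φ) := fun x hx => by
    rw [LinearMap.mem_ker, LinearMap.comp_apply, hΦ ⟨x, hx⟩]
    exact hdB' _
  let fX : X →ₗ[R] Z := (LinearMap.ker p).liftQ (d1 ∘ₗ Φ) hle ∘ₗ (LinearMap.quotKerEquivOfSurjective p hp).symm.toLinearMap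
  have hfX : ∀ x, fX (p x) = d1 (Φ x) := by
    intro x
    have : (LinearMap.quotKerEquivOfSurjective p hp).symm (p x) = (LinearMap.ker p).mkQ x := by
      rw [LinearEquiv.symm_apply_eq]; rfl
    show (LinearMap.ker p).liftQ (d1 ∘ₗ Φ) hle
      ((LinearMap.quotKerEquivOfSurjective p hp).symm (p x)) = _
    rw [this]; rfl
  obtain ⟨f', hf'⟩ := hlift fX
  let Φ' : P →ₗ[R] I1 := Φ - f' ∘ₗ p
  have hΦ'1 : ∀ x, d1 (Φ' x) = 0 := by
    intro x
    simp [Φ', hf', hfX]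
  have hΦ'2 : ∀ x : LinearMap.ker p, Φ' x.1 = dB (φ x) := by
    intro x
    have : p x.1 = 0 := x.2
    simp [Φ', this, hΦ]
  obtain ⟨Ψ, hΨ⟩ := Module.projective_lifting_property d0.rangeRestrict
    (LinearMap.codRestrict (LinearMap.range d0) Φ' (fun x => by
      obtain ⟨y, hy⟩ := (h1 _).1 (hΦ'1 x)
      exact ⟨y, hy.symm⟩)) d0.surjective_rangeRestrict
  have hΨ' : ∀ x, d0 (Ψ x) = Φ' x := fun x => congrArg Subtype.val (LinearMap.congr_fun hΨ x)
  obtain ⟨η, hη⟩ := factor_inj (LinearMap.prod J.mkQ ιA) (fun a ha => by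
      have ha1 : J.mkQ a = 0 := congrArg Prod.fst ha
      have ha2 : ιA a = 0 := congrArg Prod.snd ha
      have haJ : a ∈ J := by simpa using ha1
      have := hι ⟨a, haJ⟩ (by rw [← hιA]; exact ha2)
      exact congrArg Subtype.val this)
    (LinearMap.prod φ (Ψ ∘ₗ (LinearMap.ker p).subtype)) (fun x => by
      obtain ⟨a0, ha0⟩ := J.mkQ_surjective (φ x)
      have : d0 (ιA a0 - Ψ x.1) = 0 := by
        rw [map_sub, hΨ', hΦ'2, ← ha0, hdB, sub_self]
      obtain ⟨y, hy⟩ := (h0 _).1 this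
      refine ⟨a0 - y.1, ?_⟩
      refine Prod.ext ?_ ?_
      · show φ x = J.mkQ (a0 - y.1)
        have hy0 : J.mkQ y.1 = 0 := by simp
        rw [map_sub, ha0, hy0, sub_zero]
      · show Ψ x.1 = ιA (a0 - y.1)
        rw [map_sub, hιA, ← hy]; simp)
  obtain ⟨ψ, hψ⟩ := hA η
  refine ⟨J.mkQ ∘ₗ ψ, fun x => ?_⟩
  rw [LinearMap.comp_apply, hψ]
  exact congrArg Prod.fst (hη x)

theorem lift_claim {k A Q : Type} [Field k] [Ring A] [Algebra k A] [AddCommGroup Q]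
    [Module k Q] [Module Aᵐᵒᵖ Q] [IsScalarTower k Aᵐᵒᵖ Q] [FiniteDimensional k Q]
    [FiniteDimensional k A]
    (hd : Module.finrank k Q = Module.finrank k Aᵐᵒᵖ) (t : Q →ₗ[k] k)
    (ht : ∀ U : Submodule Aᵐᵒᵖ Q, (∀ u ∈ U, t u = 0) → U = ⊥)
    (σ : A ≃+* A) (J : Submodule Aᵐᵒᵖ A) (hJ : ∀ x, σ x ∈ J ↔ x ∈ J)
    {n m : ℕ} (c : Fin n → J) (w : Fin m → Fin n → A)
    (hgen : ∀ x : J, ∃ b : Fin n → A, x = ∑ j, MulOpposite.op (b j) • c j)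
    (hrel : ∀ b : Fin n → A, ∑ j, MulOpposite.op (b j) • c j = 0 ↔
        ∃ d : Fin m → A, ∀ j, b j = ∑ i, w i j * d i)
    (lam : Fin m → Fin n → (Q →ₗ[Aᵐᵒᵖ] Q))
    (hlam : ∀ i j q, t (lam i j q) = t (MulOpposite.op (σ (w i j)) • q))
    {M : Type} [AddCommGroup M] [Module k M] [Module Aᵐᵒᵖ M] [IsScalarTower k Aᵐᵒᵖ M]
    [FiniteDimensional k M]
    (hext : ∀ (p : (Fin n → Aᵐᵒᵖ) →ₗ[Aᵐᵒᵖ] J), Function.Surjective p →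
      ∀ φ : LinearMap.ker p →ₗ[Aᵐᵒᵖ] M, ∃ ψ : (Fin n → Aᵐᵒᵖ) →ₗ[Aᵐᵒᵖ] M, ∀ x, ψ x.1 = φ x)
    (f : Fin m → (M →ₗ[Aᵐᵒᵖ] Q)) (hf : ∀ j x, ∑ i, lam i j (f i x) = 0) :
    ∃ (r : ℕ) (u : Fin r → (M →ₗ[Aᵐᵒᵖ] Q)) (g : Fin r → Fin m → (Q →ₗ[Aᵐᵒᵖ] Q)),
      (∀ s j q, ∑ i, lam i j (g s i q) = 0) ∧ ∀ i x, f i x = ∑ s, g s i (u s x) := by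
  let r := Module.finrank k M
  let v := Module.finBasis k M
  have hu : ∀ s : Fin r, ∃ u : M →ₗ[Aᵐᵒᵖ] Q, ∀ x, t (u x) = v.coord s x :=
    fun s => trace_rep hd t ht _
  choose u hu using hu
  let U : M →ₗ[Aᵐᵒᵖ] (Fin r → Q) := LinearMap.pi u
  have hU : ∀ x, U x = 0 → x = 0 := by
    intro x hx
    apply v.ext_elem
    intro s
    have : u s x = 0 := congrFun hx s
    have h2 := hu s x
    rw [this, map_zero] at h2
    simpa using h2.symm
  -- σ-presentation
  have hval : ∀ (b : Fin n → A), (∑ j, MulOpposite.op (b j) • c j : J) = 0 ↔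
      ∑ j, (c j).1 * b j = 0 := by
    intro b
    rw [← Subtype.coe_inj]
    simp
  let p : (Fin n → Aᵐᵒᵖ) →ₗ[Aᵐᵒᵖ] J :=
    Fintype.linearCombination Aᵐᵒᵖ (fun j => (⟨σ (c j).1, (hJ _).2 (c j).2⟩ : J))
  have hp1 : ∀ b, (p b).1 = ∑ j, σ (c j).1 * MulOpposite.unop (b j) := by
    intro b
    simp [p, Fintype.linearCombination_apply]
  have hps : Function.Surjective p := by
    intro x
    obtain ⟨b, hb⟩ := hgen ⟨σ.symm x.1, by rw [← hJ]; simp⟩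
    refine ⟨fun j => MulOpposite.op (σ (b j)), ?_⟩
    apply Subtype.ext
    rw [hp1]
    have h2 := congrArg (fun y : J => σ y.1) hb
    simp at h2
    simpa using h2.symm
  have hpker : ∀ b, p b = 0 ↔
      ∃ d : Fin m → A, ∀ j, MulOpposite.unop (b j) = ∑ i, σ (w i j) * d i := by
    intro b
    have e1 : p b = 0 ↔ ∑ j, (c j).1 * σ.symm (MulOpposite.unop (b j)) = 0 := by
      rw [← Subtype.coe_inj, hp1]
      rw [← map_eq_zero_iff σ σ.injective]
      simp
    rw [e1, ← hval, hrel]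
    constructor
    · rintro ⟨d, hd⟩
      refine ⟨fun i => σ (d i), fun j => ?_⟩
      have := congrArg σ (hd j)
      simpa using this
    · rintro ⟨d, hd⟩
      refine ⟨fun i => σ.symm (d i), fun j => ?_⟩
      rw [hd]
      simp
  -- the key claim
  have key : ∀ (y : Fin m → M) (x : Fin n → Fin r → Q),
      (∀ i, U (y i) = ∑ j, MulOpposite.op (σ (w i j)) • x j) →
      ∃ z : Fin n → M, ∀ i, y i = ∑ j, MulOpposite.op (σ (w i j)) • z j := by
    intro y x hyx
    let φ0 : (Fin n → Aᵐᵒᵖ) →ₗ[Aᵐᵒᵖ] (Fin r → Q) := Fintype.linearCombination Aᵐᵒᵖ x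
    have hφ0 : ∀ b, φ0 b = ∑ j, b j • x j := fun b => Fintype.linearCombination_apply _ _ _
    obtain ⟨φ, hφ⟩ := factor_inj U hU (φ0 ∘ₗ (LinearMap.ker p).subtype) (fun b => by
      obtain ⟨d, hd⟩ := (hpker b.1).1 b.2
      refine ⟨∑ i, MulOpposite.op (d i) • y i, ?_⟩
      show φ0 b.1 = _
      rw [map_sum, hφ0]
      simp only [map_smul, hyx, Finset.smul_sum]
      rw [Finset.sum_comm]
      refine Finset.sum_congr rfl fun j _ => ?_
      rw [← MulOpposite.op_unop (b.1 j), hd, Finset.op_sum, Finset.sum_smul]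
      refine Finset.sum_congr rfl fun i _ => ?_
      rw [MulOpposite.op_mul, mul_smul])
    obtain ⟨ψ, hψ⟩ := hext p hps φ
    refine ⟨fun j => ψ (fun j' => if j = j' then 1 else 0), fun i => ?_⟩
    let b : Fin n → Aᵐᵒᵖ := fun j => MulOpposite.op (σ (w i j))
    have hb : p b = 0 := by
      rw [hpker]
      exact ⟨fun i' => if i' = i then 1 else 0, fun j => by simp [b]⟩
    have e1 : ψ b = φ ⟨b, hb⟩ := hψ ⟨b, hb⟩
    have e2 : U (ψ b) = U (y i) := by
      rw [e1, hφ, hyx]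
      exact hφ0 b
    have e3 : y i = ψ b := by
      rw [← sub_eq_zero]
      apply hU
      rw [map_sub, e2, sub_self]
    rw [e3]
    exact LinearMap.pi_apply_eq_sum_univ ψ b
  -- the functional
  let Lam : (Fin n → Fin r → Q) →ₗ[k] (Fin m → Fin r → Q) :=
    LinearMap.pi fun i => ∑ j, (Algebra.lsmul k k (Fin r → Q) (MulOpposite.op (σ (w i j)))) ∘ₗ
      LinearMap.proj j
  have hLam : ∀ x i, Lam x i = ∑ j, MulOpposite.op (σ (w i j)) • x j := by
    intro x i
    simp [Lam]
  let UM : (Fin m → M) →ₗ[k] (Fin m → Fin r → Q) :=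
    LinearMap.pi fun i => U.restrictScalars k ∘ₗ LinearMap.proj i
  have hUM : ∀ y i, UM y i = U (y i) := fun y i => rfl
  let ξ : (Fin m → M) →ₗ[k] k := ∑ i, (t ∘ₗ (f i).restrictScalars k) ∘ₗ LinearMap.proj i
  have hξ : ∀ y, ξ y = ∑ i, t (f i (y i)) := by
    intro y; simp [ξ]
  have hΞ : ∃ Ξ : (Fin m → Fin r → Q) →ₗ[k] k, (∀ x, Ξ (Lam x) = 0) ∧ ∀ y, Ξ (UM y) = ξ y := by
    have : ξ ∈ LinearMap.range ((LinearMap.range Lam).mkQ ∘ₗ UM).dualMap := by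
      rw [LinearMap.range_dualMap_eq_dualAnnihilator_ker, Submodule.mem_dualAnnihilator]
      intro y hy
      have hy' : UM y ∈ LinearMap.range Lam := by
        simpa using hy
      obtain ⟨x, hx⟩ := hy'
      obtain ⟨z, hz⟩ := key y x (fun i => by rw [← hUM, ← hx, hLam])
      rw [hξ]
      simp only [hz, map_sum, map_smul]
      rw [Finset.sum_comm]
      refine Finset.sum_eq_zero fun j _ => ?_
      simp only [← hlam]
      rw [← map_sum, hf, map_zero]
    obtain ⟨Ξ, hΞ⟩ := this
    refine ⟨Ξ ∘ₗ (LinearMap.range Lam).mkQ, fun x => ?_, fun y => ?_⟩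
    · have : (LinearMap.range Lam).mkQ (Lam x) = 0 := by
        simp
      rw [LinearMap.comp_apply, this, map_zero]
    · exact LinearMap.congr_fun hΞ y
  obtain ⟨Ξ, hΞ1, hΞ2⟩ := hΞ
  have hg : ∀ (s : Fin r) (i : Fin m), ∃ g : Q →ₗ[Aᵐᵒᵖ] Q,
      ∀ q, t (g q) = Ξ (Pi.single i (Pi.single s q)) := fun s i =>
    trace_rep hd t ht (Ξ ∘ₗ LinearMap.single k (fun _ : Fin m => Fin r → Q) i ∘ₗ
      LinearMap.single k (fun _ : Fin r => Q) s)
  choose g hg using hg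
  refine ⟨r, u, g, ?_, ?_⟩
  · intro s j q
    have : ∑ i, lam i j ∘ₗ g s i = 0 := by
      apply trace_inj t ht
      intro q
      simp only [LinearMap.sum_apply, LinearMap.comp_apply, map_sum, hlam, LinearMap.zero_apply,
        map_zero]
      simp only [← map_smul, hg]
      rw [← map_sum]
      rw [← hΞ1 (Pi.single j (Pi.single s q))]
      congr 1
      funext i
      rw [hLam, Finset.sum_apply, Finset.sum_eq_single i, Finset.sum_eq_single j]
      · simp [Pi.single_smul]
      · intro j' _ hj'
        simp [hj']
      · simp
      · intro i' _ hi'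
        simp [hi'.symm]
      · simp
    have := LinearMap.congr_fun this q
    simpa using this
  · intro i x
    have : f i = ∑ s, g s i ∘ₗ u s := by
      apply trace_inj t ht
      intro x
      simp only [LinearMap.sum_apply, LinearMap.comp_apply, map_sum, hg]
      rw [← map_sum]
      have e1 := hΞ2 (Pi.single i x)
      rw [hξ, Finset.sum_eq_single i] at e1
      · rw [Pi.single_eq_same] at e1
        rw [← e1]
        congr 1
        funext i'
        rw [hUM]
        by_cases hi : i' = i
        · subst hi
          funext s
          simp [U, Finset.sum_apply, Finset.sum_pi_single]
        · simp [hi]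
      · intro i' _ hi'
        simp [hi']
      · simp
    have := LinearMap.congr_fun this x
    simpa using this

end ModPart

section CatPart4

open Limits Pretriangulated

set_option linter.unusedSectionVars false
set_option linter.unusedVariables false

variable {C : Type} [Category.{0} C] [Preadditive C]
variable {k : Type} [Field k] [Linear k C]
variable {A : Type} [Ring A] [Algebra k A] {T : C} (α : A ≃ₐ[k] End T)
variable [HasShift C ℤ] [HasZeroObject C] [∀ n : ℤ, (shiftFunctor C n).Additive]
  [Pretriangulated C] [HasFiniteBiproducts C]

theorem retract_ext [FiniteDimensional k A] (hfin : ∀ X Y : C, FiniteDimensional k (X ⟶ Y))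
    (hser : ∀ X Y : C, Module.finrank k (X ⟶ Y) = Module.finrank k (Y ⟶ sh2 X))
    (t : FObj α (sh2 T) →ₗ[k] k) (ht : ∀ U : Submodule Aᵐᵒᵖ (FObj α (sh2 T)),
      (∀ u ∈ U, t u = 0) → U = ⊥) {V : C} {r : ℕ} (s : V ⟶ sh2 (Tpow T r))
    (s' : sh2 (Tpow T r) ⟶ V) (hs : s ≫ s' = 𝟙 _)
    {P : Type} [AddCommGroup P] [Module Aᵐᵒᵖ P] (N : Submodule Aᵐᵒᵖ P)
    (f : N →ₗ[Aᵐᵒᵖ] FObj α V) : ∃ g : P →ₗ[Aᵐᵒᵖ] FObj α V, ∀ x, g x.1 = f x := by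
  let : Module k P := Module.compHom P (algebraMap k Aᵐᵒᵖ)
  have : IsScalarTower k Aᵐᵒᵖ P := ⟨fun c a x => by
    rw [Algebra.smul_def, mul_smul]; rfl⟩
  have hQ := F_fd α hfin (sh2 T)
  have hd := Q_rank α hser
  have hg : ∀ i, ∃ g : P →ₗ[Aᵐᵒᵖ] FObj α (sh2 T), ∀ x : N,
      g x.1 = (FMap α (s ≫ shm (biproduct.π (fun _ : Fin r => T) i)) ∘ₗ f) x :=
    fun i => Q_ext hd t ht N _
  choose g hg using hg
  refine ⟨∑ i, FMap α (shm (biproduct.ι (fun _ : Fin r => T) i) ≫ s') ∘ₗ g i, fun x => ?_⟩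
  rw [LinearMap.sum_apply]
  simp only [LinearMap.comp_apply, hg]
  apply (toH α).injective
  rw [map_sum]
  simp only [toH_map]
  have h1 : ∑ i, shm (biproduct.π (fun _ : Fin r => T) i) ≫
      shm (biproduct.ι (fun _ : Fin r => T) i) = 𝟙 (sh2 (Tpow T r)) := by
    have := congrArg (fun z => (shiftFunctor C (1:ℤ)).map ((shiftFunctor C (1:ℤ)).map z))
      (biproduct.total (f := fun _ : Fin r => T))
    simp only [Functor.map_sum, Functor.map_comp, CategoryTheory.Functor.map_id] at this
    exact this
  have h2 : ∑ i, (toH α (f x) ≫ s ≫ shm (biproduct.π (fun _ : Fin r => T) i)) ≫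
      shm (biproduct.ι (fun _ : Fin r => T) i) ≫ s' =
      toH α (f x) ≫ s ≫ (∑ i, shm (biproduct.π (fun _ : Fin r => T) i) ≫
      shm (biproduct.ι (fun _ : Fin r => T) i)) ≫ s' := by
    simp only [Preadditive.comp_sum, Preadditive.sum_comp, Category.assoc]
  rw [h2, h1, Category.id_comp, hs, Category.comp_id]

theorem sigma_ideal [IsIdempotentComplete C] [FiniteDimensional k A]
    (hfin : ∀ X Y : C, FiniteDimensional k (X ⟶ Y))
    (hrig : ∀ f : T ⟶ T⟦(1:ℤ)⟧, f = 0)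
    (hct : ∀ X : C, (∀ f : T ⟶ X⟦(1:ℤ)⟧, f = 0) → InAdd T X)
    (hser : ∀ X Y : C, Module.finrank k (X ⟶ Y) = Module.finrank k (Y ⟶ sh2 X))
    (t : FObj α (sh2 T) →ₗ[k] k) (ht : ∀ U : Submodule Aᵐᵒᵖ (FObj α (sh2 T)),
      (∀ u ∈ U, t u = 0) → U = ⊥)
    (σ : A ≃+* A) (hσ : ∀ a q, t (FMap α (shm (am α a)) q) = t (MulOpposite.op (σ a) • q))
    (e : A) (he : IsIdempotentElem e) (x : A) : σ x ∈ genIdeal e ↔ x ∈ genIdeal e := by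
  have hkill : ∀ (f g : A), f ∈ genIdeal g ↔
      ∀ x : A ⧸ genIdeal g, MulOpposite.op f • x = 0 := by
    intro f g
    constructor
    · intro h x
      obtain ⟨y, rfl⟩ := (genIdeal g).mkQ_surjective x
      rw [← map_smul, ← LinearMap.mem_ker, Submodule.ker_mkQ]
      exact genIdeal_left _ _ _ h
    · intro h
      have := h ((genIdeal g).mkQ 1)
      rw [← map_smul, ← LinearMap.mem_ker, Submodule.ker_mkQ] at this
      simpa using this
  have : Module.Finite Aᵐᵒᵖ A := Module.Finite.of_restrictScalars_finite k Aᵐᵒᵖ A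
  refine genIdeal_sigma σ e ?_ ?_ x
  · rw [hkill]
    exact (e_iff α hfin hrig hct hser t ht σ hσ e he _).1 ((hkill _ _).1 (self_mem_genIdeal e))
  · rw [hkill]
    exact (e_iff α hfin hrig hct hser t ht σ hσ e he _).2
      ((hkill _ _).1 (self_mem_genIdeal (σ e)))

theorem main_cat (α : A ≃ₐ[k] End T) [IsIdempotentComplete C] [FiniteDimensional k A]
    (hfin : ∀ X Y : C, FiniteDimensional k (X ⟶ Y))
    (hrig : ∀ f : T ⟶ T⟦(1:ℤ)⟧, f = 0)
    (hct : ∀ X : C, (∀ f : T ⟶ X⟦(1:ℤ)⟧, f = 0) → InAdd T X)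
    (hser : ∀ X Y : C, Module.finrank k (X ⟶ Y) = Module.finrank k (Y ⟶ sh2 X))
    (e : A) (he : IsIdempotentElem e)
    (X : ModuleCat.{0} Aᵐᵒᵖ) [Module.Finite Aᵐᵒᵖ X] (hX : IsCM k A X)
    (h1 : Subsingleton (rext1 k A (ModuleCat.of Aᵐᵒᵖ ↥(genIdeal e)) X)) :
    Subsingleton (rext1 k A X (ModuleCat.of Aᵐᵒᵖ (A ⧸ genIdeal e))) := by
  obtain ⟨t, ht⟩ := trace_out α hfin hrig hct hser
  obtain ⟨σ, hσ⟩ := sigma_out α hfin hrig hct hser t ht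
  have hJ := sigma_ideal α hfin hrig hct hser t ht σ hσ e he
  have : Module.Finite Aᵐᵒᵖ A := Module.Finite.of_restrictScalars_finite k Aᵐᵒᵖ A
  have : IsNoetherian Aᵐᵒᵖ A := isNoetherian_of_tower k inferInstance
  have hQ := F_fd α hfin (sh2 T)
  have hd := Q_rank α hser
  obtain ⟨n, m, c, w, Y, W, l, r, θ, u, b, a, s, s', κ, hgen, hrel, hs, hu, hb, ha, hfac,
    hκ, hκ2⟩ := cat_out α hfin hrig hct hser ↥(genIdeal e)
  let : Module k X := Module.compHom X (algebraMap k Aᵐᵒᵖ)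
  have : IsScalarTower k Aᵐᵒᵖ X := ⟨fun c a x => by
    rw [Algebra.smul_def, mul_smul]; rfl⟩
  have : FiniteDimensional k X := Module.Finite.trans Aᵐᵒᵖ X
  have hlift : ∀ f : X →ₗ[Aᵐᵒᵖ] FObj α (Y⟦(1:ℤ)⟧), ∃ f' : X →ₗ[Aᵐᵒᵖ] FObj α (W⟦(1:ℤ)⟧),
      ∀ x, FMap α a (f' x) = f x := by
    intro f
    obtain ⟨q, v, g, hg1, hg2⟩ := lift_claim hd t ht σ (genIdeal e) hJ c w hgen hrel
      (fun i j => FMap α (shm (am α (w i j)))) (fun i j q => hσ _ q) (M := X)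
      (fun p hp φ => ext_extend (M := ModuleCat.of Aᵐᵒᵖ ↥(genIdeal e)) (N := X) h1 p hp φ)
      (fun i => LinearMap.proj i ∘ₗ κ ∘ₗ f) (fun j x => (hκ2 (κ (f x))).1 ⟨_, rfl⟩ j)
    have hδ : ∀ i : Fin q, ∃ δ : sh2 T ⟶ W⟦(1:ℤ)⟧, ∀ x, κ (FMap α a (FMap α δ x)) =
        LinearMap.pi (g i) x := by
      intro i
      obtain ⟨g', hg'⟩ := factor_inj κ hκ (LinearMap.pi (g i))
        (fun x => (hκ2 _).2 (fun j => hg1 i j x))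
      obtain ⟨γ, rfl⟩ := F_full α hfin hrig hct g'
      obtain ⟨δ, rfl⟩ := hfac γ
      refine ⟨δ, fun x => ?_⟩
      rw [← hg']
      congr 1
      apply (toH α).injective
      simp only [toH_map, Category.assoc]
    choose δ hδ using hδ
    refine ⟨∑ i, FMap α (δ i) ∘ₗ v i, fun x => ?_⟩
    rw [← sub_eq_zero]
    apply hκ
    rw [map_sub, sub_eq_zero, LinearMap.sum_apply, map_sum, map_sum]
    simp only [LinearMap.comp_apply, hδ]
    funext i
    rw [Finset.sum_apply]
    exact (hg2 i x).symm
  obtain ⟨ιA, hιA⟩ := retract_ext α hfin hser t ht (𝟙 (sh2 (Tpow T l))) (𝟙 _)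
    (Category.comp_id _) (genIdeal e) (FMap α u ∘ₗ θ.toLinearMap)
  refine ext_of_extend (k := k) ?_
  intro P _ _ _ p hp φ
  exact final_chase (genIdeal e) (FMap α u ∘ₗ θ.toLinearMap)
    (fun x hx => by
      have := hu _ hx
      exact θ.map_eq_zero_iff.1 this)
    (FMap α b) (fun x => (hb x).trans ⟨fun ⟨y, hy⟩ => ⟨θ.symm y, by simp [hy]⟩,
      fun ⟨y, hy⟩ => ⟨θ y, hy⟩⟩) (FMap α a) ha ιA hιA p hp
    (fun f => retract_ext α hfin hser t ht s s' hs _ f) hlift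
    (fun f => ext_extend (M := X) (N := ModuleCat.of Aᵐᵒᵖ A) hX p hp f) φ

end CatPart4

/-- Let `A` be a 2-Calabi-Yau tilted algebra, `J = A e A`, `B = A/J`,
and `X ∈ J^⊥`. Then `Ext¹_A(X, B) = 0`. -/
theorem ext1_perp_with_B_vanishes
    (k A : Type) [Field k] [IsAlgClosed k] [Ring A] [Algebra k A] [FiniteDimensional k A]
    (hA : IsCYTilted k A) (e : A) (he : IsPrimitiveIdempotent e)
    (X : ModuleCat.{0} Aᵐᵒᵖ) [Module.Finite Aᵐᵒᵖ X] (hX : IsCM k A X)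
    (h1 : Subsingleton (rext1 k A (ModuleCat.of Aᵐᵒᵖ ↥(genIdeal e)) X))
    (h2 : Subsingleton (rext1 k A X (ModuleCat.of Aᵐᵒᵖ ↥(genIdeal e)))) :
    Subsingleton (rext1 k A X (ModuleCat.of Aᵐᵒᵖ (A ⧸ genIdeal e))) := by
  obtain ⟨wit⟩ := hA
  let := wit.cat
  let := wit.pre
  let := wit.lin
  let := wit.shift
  let := wit.zero
  let := wit.shiftAdd
  let := wit.tri
  let := wit.biprod
  let := wit.idem
  obtain ⟨α⟩ := wit.algIso
  refine main_cat α wit.homFinite ?_ (fun X => (wit.clusterTilting X).1) ?_ e he.1 X hX h1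
  · refine (wit.clusterTilting wit.T).2 ⟨1, Limits.biproduct.ι (fun _ : Fin 1 => wit.T) 0,
      Limits.biproduct.π (fun _ : Fin 1 => wit.T) 0, ?_⟩
    simp
  · intro U V
    obtain ⟨E⟩ := wit.serre U V
    let i := (shiftFunctorAdd' wit.C (1:ℤ) 1 2 (by norm_num)).app U
    rw [E.finrank_eq, Subspace.dual_finrank_eq]
    exact LinearEquiv.finrank_eq (Linear.homCongr k (Iso.refl V) i)
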